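/- arXiv:1202.4539 — 2 statements merged into one kernel-verified Lean document; each statement's English description precedes it below -/
import Mathlib

section
/- For every ε > 0 and every irrational real number θ one has liminf_{q → ∞, q ∈ ℤ_{>0}} q^{2/3 − ε} ‖q²θ‖ = 0. -/
open Filter

/-- Distance from a real number to the nearest integer. -/
noncomputable def nint (x : ℝ) : ℝ := |x - round x|

/-- A power of the divisor function grows at most linearly. -/
lemma exists_card_divisors_pow_le (j : ℕ) :
    ∃ C : ℕ, ∀ n : ℕ, n ≠ 0 → n.divisors.card ^ j ≤ C * n := by
  obtain ⟨K, hK1, hK⟩ : ∃ K : ℕ, 1 ≤ K ∧ ∀ e : ℕ, (e + 1) ^ j ≤ K * 2 ^ e := by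
    have h := tendsto_pow_const_div_const_pow_of_one_lt j (r := (2 : ℝ)) (by norm_num)
    obtain ⟨B, hB⟩ := h.bddAbove_range
    refine ⟨max 1 ⌈2 * B⌉₊, le_max_left _ _, fun e => ?_⟩
    have h1 := hB ⟨e + 1, rfl⟩
    simp only at h1
    rw [div_le_iff₀ (by positivity)] at h1
    have h2 : (2 * B) ≤ ((max 1 ⌈2 * B⌉₊ : ℕ) : ℝ) :=
      (Nat.le_ceil _).trans (by exact_mod_cast le_max_right _ _)
    have h3 : ((e + 1 : ℕ) : ℝ) ^ j ≤ (max 1 ⌈2 * B⌉₊ : ℕ) * 2 ^ e := by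
      calc ((e + 1 : ℕ) : ℝ) ^ j ≤ B * 2 ^ (e + 1) := h1
        _ = 2 * B * 2 ^ e := by ring
        _ ≤ _ := by gcongr
    exact_mod_cast h3
  refine ⟨K ^ (2 ^ j), fun n hn => ?_⟩
  rw [Nat.card_divisors hn, ← Finset.prod_pow]
  have hterm : ∀ p ∈ n.primeFactors, (n.factorization p + 1) ^ j ≤
      (if p < 2 ^ j then K else 1) * p ^ n.factorization p := by
    intro p hp
    have hp2 := (Nat.prime_of_mem_primeFactors hp).two_le
    split_ifs with h
    · exact (hK _).trans (by gcongr)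
    · rw [one_mul]
      calc (n.factorization p + 1) ^ j ≤ (2 ^ n.factorization p) ^ j := by
            gcongr
            exact Nat.lt_two_pow_self
        _ = (2 ^ j) ^ n.factorization p := by rw [← pow_mul, ← pow_mul, mul_comm]
        _ ≤ _ := by gcongr; omega
  refine (Finset.prod_le_prod' hterm).trans ?_
  rw [Finset.prod_mul_distrib]
  have h2 : ∏ p ∈ n.primeFactors, p ^ n.factorization p = n :=
    Nat.prod_factorization_pow_eq_self hn
  rw [h2]
  gcongr
  rw [Finset.prod_ite, Finset.prod_const, Finset.prod_const_one, mul_one]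
  apply Nat.pow_le_pow_right hK1
  calc _ ≤ (Finset.range (2 ^ j)).card := by
        apply Finset.card_le_card
        intro p hp
        simp only [Finset.mem_filter] at hp
        simpa using hp.2
    _ = _ := by simp

/-- Uniform form of the divisor bound: on `[1, M ^ L]` the divisor function is smaller than any
given root of `M`, once `M` is large. -/
lemma exists_divisor_bound (L j C : ℕ) :
    ∃ M₀ : ℕ, ∀ M ≥ M₀, ∃ T : ℕ, 1 ≤ T ∧
      (∀ n : ℕ, n ≠ 0 → n ≤ M ^ L → n.divisors.card ≤ T) ∧ C * T ^ j < M := by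
  obtain ⟨D, hD⟩ := exists_card_divisors_pow_le (j * (L + 1))
  refine ⟨C ^ (L + 1) * D + 1, fun M hM => ?_⟩
  have hM1 : 1 ≤ M := by omega
  obtain ⟨m, hm, hmax⟩ := Finset.exists_max_image (Finset.Icc 1 (M ^ L))
    (fun n => n.divisors.card) ⟨1, by simpa using Nat.one_le_pow _ _ hM1⟩
  simp only [Finset.mem_Icc] at hm hmax
  refine ⟨m.divisors.card, ?_, fun n h0 hn => hmax n ⟨by omega, hn⟩, ?_⟩
  · exact Finset.card_pos.mpr ⟨1, by simp; omega⟩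
  · apply lt_of_pow_lt_pow_left₀ (L + 1) (by omega)
    calc (C * m.divisors.card ^ j) ^ (L + 1)
        = C ^ (L + 1) * m.divisors.card ^ (j * (L + 1)) := by rw [mul_pow, ← pow_mul]
      _ ≤ C ^ (L + 1) * (D * m) := by gcongr; exact hD m (by omega)
      _ ≤ C ^ (L + 1) * (D * M ^ L) := by gcongr; exact hm.2
      _ = (C ^ (L + 1) * D) * M ^ L := by ring
      _ < M * M ^ L := by
        apply Nat.mul_lt_mul_of_pos_right (by omega) (by positivity)
      _ = _ := by ring

/-- Möbius inversion of the coprimality condition in a sum. -/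
lemma sum_coprime_eq_sum_moebius (Q R : ℕ) (hQ : Q ≠ 0) (f : ℕ → ℝ) :
    ∑ r ∈ (Finset.Icc 1 R).filter (fun r => r.Coprime Q), f r =
      ∑ d ∈ Q.divisors, (ArithmeticFunction.moebius d : ℝ) *
        ∑ j ∈ Finset.Icc 1 (R / d), f (d * j) := by
  have hind : ∀ n : ℕ, n ≠ 0 →
      ∑ d ∈ n.divisors, (ArithmeticFunction.moebius d : ℝ) = if n = 1 then 1 else 0 := by
    intro n hn
    have := congrArg (fun F : ArithmeticFunction ℝ => F n)
      (ArithmeticFunction.coe_moebius_mul_coe_zeta (R := ℝ))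
    simp only [ArithmeticFunction.coe_mul_zeta_apply, ArithmeticFunction.one_apply,
      ArithmeticFunction.intCoe_apply] at this
    exact this
  have hinner : ∀ d ∈ Q.divisors, ∑ j ∈ Finset.Icc 1 (R / d), f (d * j) =
      ∑ r ∈ Finset.Icc 1 R, if d ∣ r then f r else 0 := by
    intro d hd
    have hd0 : 0 < d := Nat.pos_of_mem_divisors hd
    rw [← Finset.sum_filter]
    refine Finset.sum_bij (fun j _ => d * j) ?_ ?_ ?_ ?_
    · intro j hj
      simp only [Finset.mem_Icc, Finset.mem_filter] at hj ⊢
      refine ⟨⟨Nat.mul_pos hd0 (by omega), ?_⟩, dvd_mul_right _ _⟩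
      rw [mul_comm]
      exact (Nat.le_div_iff_mul_le hd0).mp hj.2
    · intro a _ b _ h
      exact Nat.eq_of_mul_eq_mul_left hd0 h
    · intro r hr
      simp only [Finset.mem_Icc, Finset.mem_filter] at hr
      obtain ⟨⟨h1, h2⟩, j, rfl⟩ := hr
      refine ⟨j, ?_, rfl⟩
      simp only [Finset.mem_Icc]
      refine ⟨Nat.pos_of_mul_pos_left h1, ?_⟩
      rw [Nat.le_div_iff_mul_le hd0, mul_comm]
      exact h2
    · intros; rfl
  have houter : ∑ d ∈ Q.divisors, (ArithmeticFunction.moebius d : ℝ) *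
      ∑ j ∈ Finset.Icc 1 (R / d), f (d * j) = ∑ d ∈ Q.divisors,
      (ArithmeticFunction.moebius d : ℝ) * ∑ r ∈ Finset.Icc 1 R, if d ∣ r then f r else 0 :=
    Finset.sum_congr rfl fun d hd => by rw [hinner d hd]
  rw [houter]
  simp only [Finset.mul_sum]
  rw [Finset.sum_comm, Finset.sum_filter]
  refine Finset.sum_congr rfl fun r hr => ?_
  have hr1 : 1 ≤ r := (Finset.mem_Icc.mp hr).1
  have h3 : ∑ d ∈ Q.divisors, (ArithmeticFunction.moebius d : ℝ) * (if d ∣ r then f r else 0) =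
      (∑ d ∈ (Nat.gcd r Q).divisors, (ArithmeticFunction.moebius d : ℝ)) * f r := by
    have : (Nat.gcd r Q).divisors = Q.divisors.filter (fun d => d ∣ r) := by
      ext d
      simp only [Nat.mem_divisors, Finset.mem_filter, Nat.dvd_gcd_iff]
      have : Nat.gcd r Q ≠ 0 := Nat.gcd_ne_zero_right hQ
      tauto
    rw [this, Finset.sum_filter, Finset.sum_mul]
    refine Finset.sum_congr rfl fun d _ => ?_
    split_ifs <;> simp
  rw [h3, hind _ (Nat.gcd_ne_zero_right hQ)]
  simp only [Nat.coprime_iff_gcd_eq_one]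
  split_ifs <;> simp

lemma abs_moebius_le_one_real (d : ℕ) : |(ArithmeticFunction.moebius d : ℝ)| ≤ 1 := by
  exact_mod_cast (ArithmeticFunction.abs_moebius_le_one (n := d))

lemma le_totient_mul_card_divisors (Q : ℕ) (hQ : Q ≠ 0) :
    Q ≤ Q.totient * Q.divisors.card := by
  have : NeZero Q := ⟨hQ⟩
  have hsurj : Function.Surjective
      (fun x : (ZMod Q)ˣ × Q.divisors => (x.1 : ZMod Q) * ((x.2 : ℕ) : ZMod Q)) := by
    intro a
    obtain ⟨d, hd, u, hu, rfl⟩ := a.eq_unit_mul_divisor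
    exact ⟨⟨hu.unit, ⟨d, Nat.mem_divisors.mpr ⟨hd, hQ⟩⟩⟩, by simp⟩
  have h := Fintype.card_le_of_surjective _ hsurj
  simpa [ZMod.card, ZMod.card_units_eq_totient] using h

/-- Lower bound for the number of integers up to `R` coprime to `Q`. -/
lemma card_coprime_ge (Q R : ℕ) (hQ : Q ≠ 0) :
    (R : ℝ) / Q.divisors.card - Q.divisors.card ≤
      (((Finset.Icc 1 R).filter (fun r => r.Coprime Q)).card : ℝ) := by
  have hcount : ∀ N : ℕ, (((Finset.Icc 1 N).filter (fun r => r.Coprime Q)).card : ℝ) =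
      ∑ d ∈ Q.divisors, (ArithmeticFunction.moebius d : ℝ) * (N / d : ℕ) := by
    intro N
    have := sum_coprime_eq_sum_moebius Q N hQ (fun _ => 1)
    simpa using this
  have hQ0 : (0 : ℝ) < Q := by exact_mod_cast Nat.pos_of_ne_zero hQ
  have hτ : (0 : ℝ) < Q.divisors.card := by
    exact_mod_cast Finset.card_pos.mpr ⟨1, by simpa using hQ⟩
  have htot : (Q.totient : ℝ) = ∑ d ∈ Q.divisors, (ArithmeticFunction.moebius d : ℝ) * (Q / d) := by
    have h1 : Q.totient = ((Finset.Icc 1 Q).filter (fun r => r.Coprime Q)).card := by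
      rw [← Nat.filter_coprime_Ico_eq_totient Q 1, add_comm 1 Q]
      simp only [Nat.coprime_comm]
      rfl
    rw [h1, hcount]
    refine Finset.sum_congr rfl fun d hd => ?_
    rw [Nat.cast_div (Nat.dvd_of_mem_divisors hd)]
    exact_mod_cast (Nat.pos_of_mem_divisors hd).ne'
  have hmain : (R : ℝ) / Q.divisors.card ≤ R * Q.totient / Q := by
    rw [div_le_div_iff₀ hτ hQ0, mul_assoc]
    gcongr
    exact_mod_cast le_totient_mul_card_divisors Q hQ
  have hdiff : |(∑ d ∈ Q.divisors, (ArithmeticFunction.moebius d : ℝ) * (R / d : ℕ)) -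
      R * Q.totient / Q| ≤ Q.divisors.card := by
    rw [htot, Finset.mul_sum, Finset.sum_div, ← Finset.sum_sub_distrib]
    refine (Finset.abs_sum_le_sum_abs _ _).trans ?_
    rw [Finset.card_eq_sum_ones, Nat.cast_sum]
    refine Finset.sum_le_sum fun d hd => ?_
    have hd0 : (0 : ℝ) < d := by exact_mod_cast Nat.pos_of_mem_divisors hd
    have h4 : (ArithmeticFunction.moebius d : ℝ) * (R / d : ℕ) -
        R * ((ArithmeticFunction.moebius d : ℝ) * (Q / d)) / Q =
        (ArithmeticFunction.moebius d : ℝ) * ((R / d : ℕ) - (R : ℝ) / d) := by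
      field_simp
    rw [h4, abs_mul, Nat.cast_one]
    refine mul_le_one₀ (abs_moebius_le_one_real d) (abs_nonneg _) ?_
    rw [abs_le]
    have h5 := Nat.floor_div_eq_div (K := ℝ) R d
    have h6 := Nat.floor_le (a := (R : ℝ) / d) (by positivity)
    have h7 := Nat.lt_floor_add_one ((R : ℝ) / d)
    rw [h5] at h6 h7
    constructor <;> linarith
  rw [hcount]
  have := (abs_le.mp hdiff).1
  linarith

lemma abs_dirichletCharacter_le_one {k : ℕ} [NeZero k] (χ : DirichletCharacter ℝ k)
    (a : ZMod k) : |χ a| ≤ 1 := by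
  simpa using DirichletCharacter.norm_le_one χ a

/-- Trivial bound for an incomplete sum of a nontrivial Dirichlet character. -/
lemma abs_sum_dirichletCharacter_le {k : ℕ} [NeZero k] (χ : DirichletCharacter ℝ k)
    (hχ : χ ≠ 1) (N : ℕ) : |∑ n ∈ Finset.Icc 1 N, χ (n : ZMod k)| ≤ k := by
  have hk : k ≠ 1 := fun h => hχ (DirichletCharacter.level_one' χ h)
  have hperiod : ∑ n ∈ Finset.range k, χ (n : ZMod k) = 0 := by
    rw [← MulChar.sum_eq_zero_of_ne_one hχ]
    refine Finset.sum_bij' (fun n _ => (n : ZMod k)) (fun a _ => a.val) ?_ ?_ ?_ ?_ ?_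
    · simp
    · intro a _; simpa using ZMod.val_lt a
    · intro a ha; exact ZMod.val_cast_of_lt (by simpa using ha)
    · intro a _; simp
    · simp
  have hblocks : ∀ m : ℕ, ∑ n ∈ Finset.range (k * m), χ (n : ZMod k) = 0 := by
    intro m
    induction m with
    | zero => simp
    | succ m ih =>
      rw [Nat.mul_succ, Finset.sum_range_add, ih]
      simpa using hperiod
  have hIcc : ∑ n ∈ Finset.Icc 1 N, χ (n : ZMod k) =
      ∑ n ∈ Finset.range (N + 1), χ (n : ZMod k) := by
    rw [Finset.range_eq_Ico, Finset.sum_eq_sum_Ico_succ_bot (by omega)]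
    simp only [Nat.cast_zero, DirichletCharacter.map_zero' χ hk, zero_add]
    rfl
  rw [hIcc, ← Nat.div_add_mod (N + 1) k, Finset.sum_range_add, hblocks, zero_add]
  refine (Finset.abs_sum_le_sum_abs _ _).trans ?_
  refine (Finset.sum_le_sum fun n _ => abs_dirichletCharacter_le_one χ _).trans ?_
  simp only [Finset.sum_const, Finset.card_range, nsmul_eq_mul, mul_one]
  exact_mod_cast (Nat.mod_lt _ (NeZero.pos k)).le

/-- A character sum to modulus `Q`, when the character is induced from modulus `g`. -/
lemma abs_sum_le_of_factorsThrough {Q g : ℕ} [NeZero Q] (χ : DirichletCharacter ℝ Q) (hχ : χ ≠ 1)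
    (h : χ.FactorsThrough g) (R : ℕ) :
    |∑ r ∈ Finset.Icc 1 R, χ (r : ZMod Q)| ≤ Q.divisors.card * g := by
  obtain ⟨hg, ψ, rfl⟩ := h
  have : NeZero g := ⟨fun h0 => NeZero.ne Q (Nat.eq_zero_of_zero_dvd (h0 ▸ hg))⟩
  have hψ : ψ ≠ 1 := fun h1 => hχ (by rw [h1, map_one])
  have hsum : ∑ r ∈ Finset.Icc 1 R, DirichletCharacter.changeLevel hg ψ (r : ZMod Q) =
      ∑ r ∈ (Finset.Icc 1 R).filter (fun r => r.Coprime Q), ψ (r : ZMod g) := by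
    rw [Finset.sum_filter]
    refine Finset.sum_congr rfl fun r _ => ?_
    split_ifs with hr
    · have := DirichletCharacter.changeLevel_eq_cast_of_dvd' ψ hg (a := (r : ℤ))
        (Nat.isCoprime_iff_coprime.mpr hr)
      simpa using this
    · apply MulChar.map_nonunit
      rwa [ZMod.isUnit_iff_coprime]
  rw [hsum, sum_coprime_eq_sum_moebius Q R (NeZero.ne Q) (fun r => ψ (r : ZMod g))]
  refine (Finset.abs_sum_le_sum_abs _ _).trans ?_
  rw [Finset.card_eq_sum_ones, Nat.cast_sum, Finset.sum_mul]
  refine Finset.sum_le_sum fun d _ => ?_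
  simp only [Nat.cast_mul, map_mul, ← Finset.mul_sum]
  rw [abs_mul, abs_mul, Nat.cast_one]
  refine mul_le_mul (abs_moebius_le_one_real d) ?_ (by positivity) (by norm_num)
  calc _ ≤ 1 * (g : ℝ) := mul_le_mul (abs_dirichletCharacter_le_one ψ _)
        (abs_sum_dirichletCharacter_le ψ hψ _) (abs_nonneg _) (by norm_num)
    _ = g := one_mul _

lemma abs_sum_mul_dirichletCharacter_le {Q Q' : ℕ} [NeZero Q] [NeZero Q']
    (χ : DirichletCharacter ℝ Q) (χ' : DirichletCharacter ℝ Q')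
    (h : ¬ χ.FactorsThrough (Q.gcd Q')) (hsq : χ' ^ 2 = 1) (N : ℕ) :
    |∑ n ∈ Finset.Icc 1 N, χ (n : ZMod Q) * χ' (n : ZMod Q')| ≤ Q * Q' := by
  have : NeZero (Q * Q') := ⟨mul_ne_zero (NeZero.ne Q) (NeZero.ne Q')⟩
  set Ψ := χ.changeLevel (Q.dvd_mul_right Q') * χ'.changeLevel (Q'.dvd_mul_left Q) with hΨdef
  have hΨ : Ψ ≠ 1 := by
    intro h1
    apply h
    refine DirichletCharacter.factorsThrough_gcd χ χ' ?_
    have h2 : (χ'.changeLevel (Q'.dvd_mul_left Q)) * (χ'.changeLevel (Q'.dvd_mul_left Q)) = 1 := by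
      rw [← map_mul, ← sq, hsq, map_one]
    exact (eq_of_mul_inv_eq_one (by rw [inv_eq_of_mul_eq_one_left h2]; exact h1))
  have := abs_sum_dirichletCharacter_le Ψ hΨ N
  rw [Nat.cast_mul] at this
  convert this using 3 with n hn
  by_cases hc : n.Coprime (Q * Q')
  · have hZ : IsCoprime (n : ℤ) ((Q * Q' : ℕ) : ℤ) := Nat.isCoprime_iff_coprime.mpr hc
    have h1 := DirichletCharacter.changeLevel_eq_cast_of_dvd' χ (Q.dvd_mul_right Q') hZ
    have h2 := DirichletCharacter.changeLevel_eq_cast_of_dvd' χ' (Q'.dvd_mul_left Q) hZ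
    simp only [Int.cast_natCast] at h1 h2
    rw [hΨdef, MulChar.mul_apply, h1, h2]
  · rw [MulChar.map_nonunit Ψ (by rwa [ZMod.isUnit_iff_coprime])]
    rw [Nat.coprime_mul_iff_right, not_and_or] at hc
    rcases hc with hc | hc
    · rw [MulChar.map_nonunit χ (by rwa [ZMod.isUnit_iff_coprime]), zero_mul]
    · rw [MulChar.map_nonunit χ' (by rwa [ZMod.isUnit_iff_coprime]), mul_zero]

lemma units_hom_real_sq {G : Type*} [Group G] [Finite G] (φ : G →* ℝˣ) (g : G) :
    φ (g ^ 2) = 1 := by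
  have h1 : (φ g) ^ Nat.card G = 1 := by rw [← map_pow, pow_card_eq_one', map_one]
  have h2 : ((φ g : ℝˣ) : ℝ) ^ Nat.card G = 1 := by
    rw [← Units.val_pow_eq_pow_val, h1, Units.val_one]
  have h3 : |((φ g : ℝˣ) : ℝ)| = 1 := by
    have : |((φ g : ℝˣ) : ℝ)| ^ Nat.card G = 1 := by rw [← abs_pow, h2, abs_one]
    exact (pow_eq_one_iff_of_nonneg (abs_nonneg _) Nat.card_pos.ne').mp this
  rw [map_pow]
  ext
  rw [Units.val_pow_eq_pow_val, ← sq_abs, h3]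
  simp

lemma hasEnoughRootsOfUnity_real_two : HasEnoughRootsOfUnity ℝ 2 where
  prim := ⟨-1, IsPrimitiveRoot.neg_one 0 (by norm_num)⟩
  cyc := rootsOfUnity.isCyclic ℝ 2

section Squares

variable (G : Type*) [CommGroup G]

lemma hasEnoughRootsOfUnity_quotient_squares :
    HasEnoughRootsOfUnity ℝ (Monoid.exponent (G ⧸ (powMonoidHom 2 : G →* G).range)) := by
  have := hasEnoughRootsOfUnity_real_two
  refine HasEnoughRootsOfUnity.of_dvd ℝ (n := 2) (Monoid.exponent_dvd_of_forall_pow_eq_one ?_)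
  intro x
  induction x using QuotientGroup.induction_on with
  | H z =>
    rw [← QuotientGroup.mk_pow, QuotientGroup.eq_one_iff]
    exact ⟨z, rfl⟩

variable [Finite G]

/-- Homomorphisms to `ℝˣ` correspond to homomorphisms from the group modulo squares. -/
noncomputable def homQuotientSquaresEquiv :
    (G →* ℝˣ) ≃ (G ⧸ (powMonoidHom 2 : G →* G).range →* ℝˣ) where
  toFun φ := QuotientGroup.lift _ φ (by rintro _ ⟨g, rfl⟩; exact units_hom_real_sq φ g)
  invFun ψ := ψ.comp (QuotientGroup.mk' _)
  left_inv φ := by ext; rfl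
  right_inv ψ := by ext; rfl

lemma finite_hom_units_real : Finite (G →* ℝˣ) := by
  have := hasEnoughRootsOfUnity_quotient_squares G
  exact Finite.of_equiv _ (homQuotientSquaresEquiv G).symm

lemma card_hom_units_real :
    Nat.card (G →* ℝˣ) = Nat.card (powMonoidHom 2 : G →* G).ker := by
  have := hasEnoughRootsOfUnity_quotient_squares G
  rw [Nat.card_congr (homQuotientSquaresEquiv G),
    CommGroup.card_monoidHom_of_hasEnoughRootsOfUnity, ← Subgroup.index_range]
  rfl

variable {G} in
lemma exists_sq_eq_of_forall_hom (a : G) (h : ∀ φ : G →* ℝˣ, φ a = 1) : ∃ b, b ^ 2 = a := by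
  have := hasEnoughRootsOfUnity_quotient_squares G
  by_contra hne
  have hne' : (a : G ⧸ (powMonoidHom 2 : G →* G).range) ≠ 1 := by
    rw [Ne, QuotientGroup.eq_one_iff]
    rintro ⟨b, hb⟩
    exact hne ⟨b, hb⟩
  obtain ⟨ψ, hψ⟩ := CommGroup.exists_apply_ne_one_of_hasEnoughRootsOfUnity _ ℝ hne'
  exact hψ (h (ψ.comp (QuotientGroup.mk' _)))

end Squares

/-- An odd modulus has at most as many square roots of one as divisors. -/
lemma card_sq_eq_one_le (Q : ℕ) (hQ : Odd Q) :
    Nat.card (powMonoidHom 2 : (ZMod Q)ˣ →* (ZMod Q)ˣ).ker ≤ Q.divisors.card := by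
  have hQ0 : Q ≠ 0 := by rintro rfl; simp at hQ
  have : NeZero Q := ⟨hQ0⟩
  have hsq : ∀ x : (powMonoidHom 2 : (ZMod Q)ˣ →* (ZMod Q)ˣ).ker,
      (Q : ℤ) ∣ (((x.1 : ZMod Q).val : ℤ) - 1) * (((x.1 : ZMod Q).val : ℤ) + 1) := by
    intro x
    have h1 : (x.1 : ZMod Q) ^ 2 = 1 := by
      have : x.1 ^ 2 = 1 := x.2
      rw [← Units.val_pow_eq_pow_val, this, Units.val_one]
    rw [← ZMod.intCast_zmod_eq_zero_iff_dvd]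
    push_cast
    rw [ZMod.natCast_zmod_val]
    linear_combination h1
  let f : (powMonoidHom 2 : (ZMod Q)ˣ →* (ZMod Q)ˣ).ker → Q.divisors := fun x =>
    ⟨Int.gcd (((x.1 : ZMod Q).val : ℤ) - 1) Q,
      Nat.mem_divisors.mpr ⟨Int.natCast_dvd_natCast.mp (Int.gcd_dvd_right _ _), hQ0⟩⟩
  have hf : Function.Injective f := by
    intro x y hxy
    have hg : Int.gcd (((x.1 : ZMod Q).val : ℤ) - 1) Q =
        Int.gcd (((y.1 : ZMod Q).val : ℤ) - 1) Q := congrArg Subtype.val hxy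
    have hx := hsq x
    have hy := hsq y
    set u : ℤ := ((x.1 : ZMod Q).val : ℤ) with hu
    set v : ℤ := ((y.1 : ZMod Q).val : ℤ) with hv
    set d := Int.gcd (u - 1) Q with hd
    have hplus : ∀ w : ℤ, Int.gcd (w - 1) Q = d → (Q : ℤ) ∣ (w - 1) * (w + 1) →
        (Q : ℤ) ∣ d * (w + 1) := by
      intro w hw hdvd
      rw [← hw, Int.gcd_eq_gcd_ab, add_mul, mul_right_comm, mul_assoc (Q : ℤ)]
      exact dvd_add (hdvd.mul_right _) (dvd_mul_right _ _)
    have h1 : (d : ℤ) ∣ u - v := by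
      have hu1 : (d : ℤ) ∣ u - 1 := Int.gcd_dvd_left _ _
      have hv1 : (d : ℤ) ∣ v - 1 := by rw [hg]; exact Int.gcd_dvd_left _ _
      have := dvd_sub hu1 hv1
      simpa using this
    have hdQ : (d : ℤ) ∣ Q := Int.gcd_dvd_right _ _
    obtain ⟨e, he⟩ := hdQ
    have hd0 : (d : ℤ) ≠ 0 := by
      intro h0; rw [h0, zero_mul] at he; exact hQ0 (by exact_mod_cast he)
    have hpx := hplus u rfl hx
    have hpy := hplus v hg.symm hy
    rw [he] at hpx hpy
    have hex := (mul_dvd_mul_iff_left hd0).mp hpx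
    have hey := (mul_dvd_mul_iff_left hd0).mp hpy
    have h2 : e ∣ u - v := by simpa using dvd_sub hex hey
    have hcop : IsCoprime (d : ℤ) e := by
      rw [Int.isCoprime_iff_gcd_eq_one]
      set c := Int.gcd d e with hc
      have hc1 : (c : ℤ) ∣ u - 1 := (Int.gcd_dvd_left _ _).trans (Int.gcd_dvd_left _ _)
      have hc2 : (c : ℤ) ∣ u + 1 := (Int.gcd_dvd_right _ _).trans hex
      have hc3 : (c : ℤ) ∣ 2 := by
        have := dvd_sub hc2 hc1
        ring_nf at this
        exact this
      have hc4 : c ∣ Q := by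
        have : (c : ℤ) ∣ Q := (Int.gcd_dvd_left _ _).trans (Int.gcd_dvd_right _ _)
        exact_mod_cast this
      have hc5 : c ∣ 2 := by exact_mod_cast hc3
      have : Nat.Coprime 2 Q := Nat.coprime_two_left.mpr hQ
      exact Nat.eq_one_of_dvd_coprimes this hc5 hc4
    have h3 : (Q : ℤ) ∣ u - v := by rw [he]; exact hcop.mul_dvd h1 h2
    rw [← ZMod.intCast_zmod_eq_zero_iff_dvd] at h3
    rw [hu, hv] at h3
    push_cast at h3
    rw [ZMod.natCast_zmod_val, ZMod.natCast_zmod_val, sub_eq_zero] at h3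
    exact Subtype.ext (Units.ext h3)
  exact (Nat.card_le_card_of_injective f hf).trans_eq (Nat.card_eq_card_toFinset _ |>.trans (by simp))

/-- If all nontrivial real character sums modulo `Q` over `[1, R]` are small, then every class
coprime to `Q` becomes a square after multiplication by some `r ∈ [1, R]`. -/
lemma exists_mul_eq_sq (Q R : ℕ) [NeZero Q] (hQ : Odd Q) (A : (ZMod Q)ˣ)
    (hpos : 0 < ((Finset.Icc 1 R).filter (fun r => r.Coprime Q)).card)
    (hgood : ∀ χ : DirichletCharacter ℝ Q, χ ≠ 1 →
      |∑ r ∈ Finset.Icc 1 R, χ (r : ZMod Q)| * Q.divisors.card <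
        ((Finset.Icc 1 R).filter (fun r => r.Coprime Q)).card) :
    ∃ r ∈ Finset.Icc 1 R, ∃ l : (ZMod Q)ˣ, (l : ZMod Q) ^ 2 = r * A := by
  classical
  have hfin := finite_hom_units_real (ZMod Q)ˣ
  have hfinX : Finite (DirichletCharacter ℝ Q) := Finite.of_equiv _ MulChar.equivToUnitHom.symm
  have := Fintype.ofFinite (DirichletCharacter ℝ Q)
  have hcard : Fintype.card (DirichletCharacter ℝ Q) ≤ Q.divisors.card := by
    rw [← Nat.card_eq_fintype_card, Nat.card_congr MulChar.equivToUnitHom, card_hom_units_real]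
    exact card_sq_eq_one_le Q hQ
  set S₀ : ℝ := ((((Finset.Icc 1 R).filter (fun r => r.Coprime Q)).card : ℕ) : ℝ) with hS₀
  have hS₀pos : 0 < S₀ := by rw [hS₀]; exact_mod_cast hpos
  have hτ : (0 : ℝ) < Q.divisors.card := by
    exact_mod_cast Finset.card_pos.mpr ⟨1, by simpa using NeZero.ne Q⟩
  have htriv : ∑ r ∈ Finset.Icc 1 R, (1 : DirichletCharacter ℝ Q) (r : ZMod Q) = S₀ := by
    rw [hS₀, Finset.card_eq_sum_ones, Nat.cast_sum, Finset.sum_filter]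
    refine Finset.sum_congr rfl fun r _ => ?_
    split_ifs with h
    · simpa using MulChar.one_apply (R' := ℝ) ((ZMod.isUnit_iff_coprime r Q).mpr h)
    · exact MulChar.map_nonunit _ (by rwa [ZMod.isUnit_iff_coprime])
  have htotal : 0 < ∑ χ : DirichletCharacter ℝ Q,
      χ (A : ZMod Q) * ∑ r ∈ Finset.Icc 1 R, χ (r : ZMod Q) := by
    rw [← Finset.add_sum_erase _ _ (Finset.mem_univ (1 : DirichletCharacter ℝ Q)), htriv,
      MulChar.one_apply_coe, one_mul]
    have hrest : |∑ χ ∈ Finset.univ.erase (1 : DirichletCharacter ℝ Q),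
        χ (A : ZMod Q) * ∑ r ∈ Finset.Icc 1 R, χ (r : ZMod Q)| ≤
        (Q.divisors.card - 1) * (S₀ / Q.divisors.card) := by
      refine (Finset.abs_sum_le_sum_abs _ _).trans ?_
      calc _ ≤ ∑ χ ∈ Finset.univ.erase (1 : DirichletCharacter ℝ Q), S₀ / Q.divisors.card := by
            refine Finset.sum_le_sum fun χ hχ => ?_
            rw [abs_mul, le_div_iff₀ hτ]
            calc _ ≤ 1 * |∑ r ∈ Finset.Icc 1 R, χ (r : ZMod Q)| * Q.divisors.card := by
                  gcongr
                  exact abs_dirichletCharacter_le_one χ _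
              _ ≤ S₀ := by
                  rw [one_mul]
                  exact (hgood χ (Finset.ne_of_mem_erase hχ)).le
        _ ≤ _ := by
            rw [Finset.sum_const, nsmul_eq_mul, Finset.card_erase_of_mem (Finset.mem_univ _),
              Finset.card_univ]
            gcongr
            rw [Nat.cast_sub Fintype.card_pos, Nat.cast_one]
            gcongr
    have h1 := (abs_le.mp hrest).1
    have h2 : (Q.divisors.card - 1) * (S₀ / Q.divisors.card) < S₀ := by
      rw [mul_div_assoc', div_lt_iff₀ hτ]
      nlinarith
    linarith
  simp only [Finset.mul_sum] at htotal
  rw [Finset.sum_comm] at htotal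
  obtain ⟨r, hr, hne⟩ := Finset.exists_ne_zero_of_sum_ne_zero htotal.ne'
  refine ⟨r, hr, ?_⟩
  have hunit : IsUnit (r : ZMod Q) := by
    by_contra hnu
    exact hne (Finset.sum_eq_zero fun χ _ => by rw [MulChar.map_nonunit χ hnu, mul_zero])
  obtain ⟨u, hu⟩ := hunit
  simp only [← map_mul, ← hu, ← Units.val_mul] at hne
  have hall : ∀ φ : (ZMod Q)ˣ →* ℝˣ, φ (A * u) = 1 := by
    intro φ
    set χ₀ : DirichletCharacter ℝ Q := MulChar.ofUnitHom φ with hχ₀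
    have h1 : χ₀ ((A * u : (ZMod Q)ˣ) : ZMod Q) *
        ∑ χ : DirichletCharacter ℝ Q, χ ((A * u : (ZMod Q)ˣ) : ZMod Q) =
        ∑ χ : DirichletCharacter ℝ Q, χ ((A * u : (ZMod Q)ˣ) : ZMod Q) := by
      rw [Finset.mul_sum, ← Equiv.sum_comp (Equiv.mulLeft χ₀)
        (fun χ : DirichletCharacter ℝ Q => χ ((A * u : (ZMod Q)ˣ) : ZMod Q))]
      simp [MulChar.mul_apply]
    have h2 := mul_right_cancel₀ hne (h1.trans (one_mul _).symm)
    rw [hχ₀, MulChar.ofUnitHom_coe] at h2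
    exact Units.ext h2
  obtain ⟨l, hl⟩ := exists_sq_eq_of_forall_hom _ hall
  refine ⟨l, ?_⟩
  rw [← Units.val_pow_eq_pow_val, hl, Units.val_mul, hu, mul_comm]

/-- A large sieve for almost orthogonal, completely multiplicative functions with large partial
sums. -/
lemma large_sieve {ι : Type*} (Y : Finset ι) (c : ι → ℕ → ℝ)
    (hone : ∀ y, c y 1 = 1) (hmul : ∀ y m n, c y (m * n) = c y m * c y n)
    (hbd : ∀ y n, |c y n| ≤ 1) (R k T : ℕ) (hk : Even k) (B D : ℝ) (hB : 0 ≤ B) (hD : 0 ≤ D)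
    (hT : ∀ n : ℕ, n ≠ 0 → n ≤ R ^ k → n.divisors.card ≤ T)
    (hcor : ∀ y ∈ Y, ∀ y' ∈ Y, y ≠ y' → |∑ n ∈ Finset.Icc 1 (R ^ k), c y n * c y' n| ≤ B)
    (hlarge : ∀ y ∈ Y, D ≤ |∑ r ∈ Finset.Icc 1 R, c y r|) :
    (Y.card * D ^ k) ^ 2 ≤
      ((T : ℝ) ^ k * (R : ℝ) ^ k) * (Y.card * (R : ℝ) ^ k + (Y.card : ℝ) ^ 2 * B) := by
  classical
  set V := Fintype.piFinset (fun _ : Fin k => Finset.Icc 1 R) with hV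
  set F : ℕ → ℝ := fun n => ∑ y ∈ Y, c y n with hF
  set b : ℕ → ℝ := fun n => ((V.filter (fun v => ∏ i, v i = n)).card : ℝ) with hb
  have hprod : ∀ y (v : Fin k → ℕ), c y (∏ i, v i) = ∏ i, c y (v i) := by
    intro y v
    exact map_prod (⟨⟨c y, hone y⟩, hmul y⟩ : ℕ →* ℝ) v Finset.univ
  have hmaps : ∀ v ∈ V, ∏ i, v i ∈ Finset.Icc 1 (R ^ k) := by
    intro v hv
    rw [hV, Fintype.mem_piFinset] at hv
    rw [Finset.mem_Icc]
    constructor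
    · exact Finset.one_le_prod' fun i _ => (Finset.mem_Icc.mp (hv i)).1
    · calc ∏ i, v i ≤ ∏ _i : Fin k, R :=
            Finset.prod_le_prod' fun i _ => (Finset.mem_Icc.mp (hv i)).2
        _ = R ^ k := by simp
  have hpow : ∀ y, (∑ r ∈ Finset.Icc 1 R, c y r) ^ k = ∑ v ∈ V, c y (∏ i, v i) := by
    intro y
    rw [Finset.sum_pow']
    simp only [hprod, hV]
  have hsum : ∑ y ∈ Y, (∑ r ∈ Finset.Icc 1 R, c y r) ^ k =
      ∑ n ∈ Finset.Icc 1 (R ^ k), b n * F n := by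
    simp only [hpow]
    rw [Finset.sum_comm]
    change ∑ v ∈ V, F (∏ i, v i) = _
    rw [← Finset.sum_fiberwise_of_maps_to hmaps]
    refine Finset.sum_congr rfl fun n _ => ?_
    rw [Finset.sum_congr rfl (g := fun _ => F n)
      (fun v hv => by rw [(Finset.mem_filter.mp hv).2]), Finset.sum_const, nsmul_eq_mul]
  have hlow : Y.card * D ^ k ≤ ∑ n ∈ Finset.Icc 1 (R ^ k), b n * F n := by
    rw [← hsum, ← nsmul_eq_mul]
    refine Finset.card_nsmul_le_sum _ _ _ fun y hy => ?_
    rw [← hk.pow_abs (∑ r ∈ Finset.Icc 1 R, c y r)]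
    exact pow_le_pow_left₀ hD (hlarge y hy) k
  have hbmax : ∀ n ∈ Finset.Icc 1 (R ^ k), b n ≤ (T : ℝ) ^ k := by
    intro n hn
    rw [Finset.mem_Icc] at hn
    have hn0 : n ≠ 0 := by omega
    have hsub : V.filter (fun v => ∏ i, v i = n) ⊆
        Fintype.piFinset (fun _ : Fin k => n.divisors) := by
      intro v hv
      rw [Finset.mem_filter] at hv
      rw [Fintype.mem_piFinset]
      intro i
      rw [Nat.mem_divisors]
      exact ⟨hv.2 ▸ Finset.dvd_prod_of_mem v (Finset.mem_univ i), hn0⟩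
    have h1 := Finset.card_le_card hsub
    rw [Fintype.card_piFinset] at h1
    simp only [Finset.prod_const, Finset.card_univ, Fintype.card_fin] at h1
    have h2 := h1.trans (Nat.pow_le_pow_left (hT n hn0 hn.2) k)
    simp only [hb]
    exact_mod_cast h2
  have hbsum : ∑ n ∈ Finset.Icc 1 (R ^ k), b n = (R : ℝ) ^ k := by
    have := Finset.card_eq_sum_card_fiberwise hmaps
    have hVc : V.card = R ^ k := by simp [hV]
    rw [hVc] at this
    simp only [hb]
    exact_mod_cast this.symm
  have hb2 : ∑ n ∈ Finset.Icc 1 (R ^ k), b n ^ 2 ≤ (T : ℝ) ^ k * (R : ℝ) ^ k := by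
    rw [← hbsum, Finset.mul_sum]
    refine Finset.sum_le_sum fun n hn => ?_
    rw [sq]
    exact mul_le_mul_of_nonneg_right (hbmax n hn) (Nat.cast_nonneg _)
  have hF2 : ∑ n ∈ Finset.Icc 1 (R ^ k), F n ^ 2 ≤
      Y.card * (R : ℝ) ^ k + (Y.card : ℝ) ^ 2 * B := by
    have hexp : ∑ n ∈ Finset.Icc 1 (R ^ k), F n ^ 2 =
        ∑ y ∈ Y, ∑ y' ∈ Y, ∑ n ∈ Finset.Icc 1 (R ^ k), c y n * c y' n := by
      simp only [hF, sq, Finset.sum_mul_sum]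
      rw [Finset.sum_comm]
      exact Finset.sum_congr rfl fun y _ => Finset.sum_comm
    rw [hexp]
    have hrow : ∀ y ∈ Y, ∑ y' ∈ Y, ∑ n ∈ Finset.Icc 1 (R ^ k), c y n * c y' n ≤
        (R : ℝ) ^ k + Y.card * B := by
      intro y hy
      rw [← Finset.add_sum_erase _ _ hy]
      refine add_le_add ?_ ?_
      · calc _ ≤ ∑ n ∈ Finset.Icc 1 (R ^ k), (1 : ℝ) := by
              refine Finset.sum_le_sum fun n _ => ?_
              rw [← abs_mul_abs_self]
              exact mul_le_one₀ (hbd y n) (abs_nonneg _) (hbd y n)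
          _ = _ := by simp
      · calc _ ≤ ∑ y' ∈ Y.erase y, B := Finset.sum_le_sum fun y' hy' =>
              (le_abs_self _).trans (hcor y hy y' (Finset.mem_of_mem_erase hy')
                (Finset.ne_of_mem_erase hy').symm)
          _ = (Y.erase y).card * B := by rw [Finset.sum_const, nsmul_eq_mul]
          _ ≤ _ := by
              gcongr
              exact Finset.erase_subset _ _
    refine (Finset.sum_le_sum hrow).trans ?_
    rw [Finset.sum_const, nsmul_eq_mul]
    apply le_of_eq
    ring
  calc (Y.card * D ^ k) ^ 2 ≤ (∑ n ∈ Finset.Icc 1 (R ^ k), b n * F n) ^ 2 := by gcongr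
    _ ≤ _ := Finset.sum_mul_sq_le_sq_mul_sq _ _ _
    _ ≤ _ := by gcongr

lemma dirichletCharacter_real_sq {Q : ℕ} [NeZero Q] (χ : DirichletCharacter ℝ Q) : χ ^ 2 = 1 := by
  ext u
  have h := congrArg Units.val (units_hom_real_sq χ.toUnitHom u)
  rw [MulChar.pow_apply_coe, MulChar.one_apply_coe, ← map_pow, ← Units.val_pow_eq_pow_val,
    ← MulChar.coe_toUnitHom]
  exact h

/-- Either every class coprime to `Q` becomes a square after multiplication by some `r ≤ R`,
or some nontrivial real character has a large sum over `[1, R]`. -/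
lemma forall_exists_mul_eq_sq_or (Q R T : ℕ) [NeZero Q] (hQ : Odd Q)
    (hT : Q.divisors.card ≤ T) (hTR : 2 * T ^ 2 ≤ R) :
    (∀ A : (ZMod Q)ˣ, ∃ r ∈ Finset.Icc 1 R, ∃ l : (ZMod Q)ˣ, (l : ZMod Q) ^ 2 = r * A) ∨
      ∃ χ : DirichletCharacter ℝ Q, χ ≠ 1 ∧
        (R : ℝ) / (2 * T ^ 2) ≤ |∑ r ∈ Finset.Icc 1 R, χ (r : ZMod Q)| := by
  have hτ : (1 : ℝ) ≤ Q.divisors.card := by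
    exact_mod_cast Finset.card_pos.mpr ⟨1, by simpa using NeZero.ne Q⟩
  have hT' : (Q.divisors.card : ℝ) ≤ T := by exact_mod_cast hT
  have hTR' : 2 * (T : ℝ) ^ 2 ≤ R := by exact_mod_cast hTR
  have hTpos : (0 : ℝ) < T := by linarith
  have hS : (R : ℝ) / (2 * T) ≤
      (((Finset.Icc 1 R).filter (fun r => r.Coprime Q)).card : ℝ) := by
    refine le_trans ?_ (card_coprime_ge Q R (NeZero.ne Q))
    have h1 : (R : ℝ) / T ≤ R / Q.divisors.card := by gcongr
    have h2 : (T : ℝ) ≤ R / (2 * T) := by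
      rw [le_div_iff₀ (by positivity)]
      linarith
    have h3 : (R : ℝ) / T = R / (2 * T) + R / (2 * T) := by field_simp; norm_num
    linarith
  have hRpos : (0 : ℝ) < R := by nlinarith
  by_cases hgood : ∀ χ : DirichletCharacter ℝ Q, χ ≠ 1 →
      |∑ r ∈ Finset.Icc 1 R, χ (r : ZMod Q)| * Q.divisors.card <
        ((Finset.Icc 1 R).filter (fun r => r.Coprime Q)).card
  · left
    intro A
    refine exists_mul_eq_sq Q R hQ A ?_ hgood
    have : (0 : ℝ) < R / (2 * T) := by positivity
    exact_mod_cast this.trans_le hS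
  · right
    push Not at hgood
    obtain ⟨χ, hχ, h⟩ := hgood
    refine ⟨χ, hχ, ?_⟩
    have h1 : (R : ℝ) / (2 * T) ≤ |∑ r ∈ Finset.Icc 1 R, χ (r : ZMod Q)| * T :=
      (hS.trans h).trans (by gcongr)
    rw [div_le_iff₀ (by positivity)] at h1 ⊢
    linarith

lemma gcd_add_mul_le {b h y y' M : ℕ} (hbh : b.Coprime h) (hy : y ≤ M) (hy' : y' ≤ M)
    (hne : y ≠ y') : (b + y * h).gcd (b + y' * h) ≤ M := by
  wlog hlt : y < y' generalizing y y'
  · rw [Nat.gcd_comm]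
    exact this hy' hy hne.symm (by omega)
  have h1 : (b + y * h).gcd (b + y' * h) ∣ (y' - y) * h := by
    have := Nat.dvd_sub (Nat.gcd_dvd_right (b + y * h) (b + y' * h))
      (Nat.gcd_dvd_left (b + y * h) (b + y' * h))
    rwa [Nat.add_sub_add_left, ← Nat.sub_mul] at this
  have h2 : (b + y * h).Coprime h := by simpa using hbh
  have h3 := (h2.coprime_dvd_left (Nat.gcd_dvd_left _ (b + y' * h))).dvd_of_dvd_mul_right h1
  exact (Nat.le_of_dvd (by omega) h3).trans (by omega)

/-- Among the moduli `b + y * h` with `y ≤ M` there is one modulo which every reduced class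
becomes a square after multiplication by some `r ≤ M ^ 2`. -/
lemma exists_good_modulus (m : ℕ) : ∃ M₀ : ℕ, ∀ M ≥ M₀, ∀ b h : ℕ, Even h → b.Coprime h →
    1 ≤ h → b ≤ h → h < (M + 1) ^ m → ∃ y ∈ Finset.Icc 1 M, ∀ A : (ZMod (b + y * h))ˣ,
      ∃ r ∈ Finset.Icc 1 (M ^ 2), ∃ l : (ZMod (b + y * h))ˣ, (l : ZMod (b + y * h)) ^ 2 = r * A := by
  obtain ⟨k, hk⟩ : ∃ k, k = 2 * m + 4 := ⟨_, rfl⟩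
  obtain ⟨M₀, hM₀⟩ := exists_divisor_bound (2 * k) (5 * k) (2 ^ (2 * k + 1))
  refine ⟨M₀, fun M hM b h heven hbh hh hb hhM => ?_⟩
  obtain ⟨T, hT1, hT, hTM⟩ := hM₀ M hM
  have hT3 : 2 * T ^ 3 < M := by
    refine lt_of_le_of_lt (Nat.mul_le_mul ?_ (Nat.pow_le_pow_right hT1 (by omega))) hTM
    exact Nat.le_self_pow (by omega) 2
  have hM2 : 2 ≤ M := by
    have : 1 ≤ T ^ 3 := Nat.one_le_pow _ _ hT1
    omega
  have hTR : 2 * T ^ 2 ≤ M ^ 2 := by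
    have h1 : T ^ 2 ≤ T ^ 3 := Nat.pow_le_pow_right hT1 (by omega)
    nlinarith
  have hne : ∀ y ∈ Finset.Icc 1 M, NeZero (b + y * h) := fun y hy => ⟨by
    have := Nat.mul_le_mul (Finset.mem_Icc.mp hy).1 hh
    omega⟩
  have hQle : ∀ y ∈ Finset.Icc 1 M, b + y * h ≤ M ^ (2 * m + 2) := by
    intro y hy
    calc b + y * h ≤ h + M * h := add_le_add hb (Nat.mul_le_mul_right h (Finset.mem_Icc.mp hy).2)
      _ = (M + 1) * h := by ring
      _ ≤ (M + 1) * (M + 1) ^ m := Nat.mul_le_mul_left _ hhM.le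
      _ = (M + 1) ^ (m + 1) := by ring
      _ ≤ (M ^ 2) ^ (m + 1) := Nat.pow_le_pow_left (by nlinarith) _
      _ = M ^ (2 * m + 2) := by rw [← pow_mul]; ring_nf
  have hτ : ∀ y ∈ Finset.Icc 1 M, (b + y * h).divisors.card ≤ T := fun y hy =>
    hT _ (hne y hy).out ((hQle y hy).trans (Nat.pow_le_pow_right (by omega) (by omega)))
  by_contra! hbad
  have hχ : ∀ y : {y // y ∈ Finset.Icc 1 M}, ∃ χ : DirichletCharacter ℝ (b + y * h), χ ≠ 1 ∧
      ((M ^ 2 : ℕ) : ℝ) / (2 * T ^ 2) ≤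
        |∑ r ∈ Finset.Icc 1 (M ^ 2), χ (r : ZMod (b + y * h))| := by
    rintro ⟨y, hy⟩
    have := hne y hy
    have hodd : Odd (b + y * h) := by
      refine Odd.add_even ?_ (heven.mul_left y)
      exact Nat.Coprime.odd_of_right (hbh.coprime_dvd_right heven.two_dvd)
    refine (forall_exists_mul_eq_sq_or _ (M ^ 2) T hodd (hτ y hy) hTR).resolve_left fun hall => ?_
    obtain ⟨A, hA⟩ := hbad y hy
    obtain ⟨r, hr, l, hl⟩ := hall A
    exact hA r hr l hl
  choose χ hχ1 hχ2 using hχ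
  have hTpos : (0 : ℝ) < T := by exact_mod_cast hT1
  have hMpos : (0 : ℝ) < M := by exact_mod_cast (by omega : 0 < M)
  have key := large_sieve (Finset.univ : Finset {y // y ∈ Finset.Icc 1 M})
    (fun y n => χ y (n : ZMod (b + y * h))) (fun y => by simp) (fun y a b => by simp)
    (fun y n => by
      have := hne y y.2
      exact abs_dirichletCharacter_le_one _ _) (M ^ 2) k T ⟨m + 2, by omega⟩
    ((M ^ (2 * m + 2) : ℝ) * M ^ (2 * m + 2)) (((M ^ 2 : ℕ) : ℝ) / (2 * T ^ 2))
    (by positivity) (by positivity) (fun n hn hn' => hT n hn (by rwa [← pow_mul] at hn'))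
    (fun y _ y' _ hyy' => by
      have := hne y y.2
      have := hne y' y'.2
      refine (abs_sum_mul_dirichletCharacter_le (χ y) (χ y') ?_ (dirichletCharacter_real_sq _)
        _).trans ?_
      · intro hfac
        have h1 := (hχ2 y).trans (abs_sum_le_of_factorsThrough (χ y) (hχ1 y) hfac _)
        have hg : (b + y * h).gcd (b + y' * h) ≤ M :=
          gcd_add_mul_le hbh (Finset.mem_Icc.mp y.2).2 (Finset.mem_Icc.mp y'.2).2
            (fun he => hyy' (Subtype.ext he))
        have h2 : ((M ^ 2 : ℕ) : ℝ) / (2 * T ^ 2) ≤ T * M :=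
          h1.trans (mul_le_mul (by exact_mod_cast hτ y y.2) (by exact_mod_cast hg)
            (Nat.cast_nonneg _) (Nat.cast_nonneg _))
        rw [div_le_iff₀ (by positivity)] at h2
        have h3 : (2 * T ^ 3 : ℝ) < M := by exact_mod_cast hT3
        push_cast at h2
        nlinarith
      · exact mul_le_mul (by exact_mod_cast hQle y y.2) (by exact_mod_cast hQle y' y'.2)
          (Nat.cast_nonneg _) (by positivity))
    (fun y _ => hχ2 y)
  have hTM' : (2 ^ (2 * k + 1) * T ^ (5 * k) : ℝ) < M := by exact_mod_cast hTM
  have hcard : (Finset.univ : Finset {y // y ∈ Finset.Icc 1 M}).card = M := by simp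
  rw [hcard] at key
  set N : ℝ := ((M ^ 2 : ℕ) : ℝ) ^ k with hN
  have hNpos : 0 < N := by positivity
  have hB : (M : ℝ) * ((M ^ (2 * m + 2) : ℝ) * M ^ (2 * m + 2)) ≤ N := by
    rw [hN, hk]
    push_cast
    rw [← pow_mul, ← pow_add, ← pow_succ']
    exact pow_le_pow_right₀ (by exact_mod_cast (by omega : 1 ≤ M)) (by omega)
  have hDk : (((M ^ 2 : ℕ) : ℝ) / (2 * T ^ 2)) ^ k = N / (2 ^ k * T ^ (2 * k)) := by
    rw [div_pow, mul_pow, ← pow_mul]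
  rw [hDk] at key
  have h1 : ((M : ℝ) * (N / (2 ^ k * T ^ (2 * k)))) ^ 2 ≤ (T ^ k * N) * (2 * (M * N)) := by
    refine key.trans ?_
    gcongr
    nlinarith
  have h2 : ((M : ℝ) * (N / (2 ^ k * T ^ (2 * k)))) ^ 2 =
      M * N ^ 2 * M / (2 ^ (2 * k) * T ^ (4 * k)) := by
    field_simp
    ring
  rw [h2, div_le_iff₀ (by positivity)] at h1
  have h3 : M * N ^ 2 * (M : ℝ) ≤ M * N ^ 2 * (2 ^ (2 * k + 1) * T ^ (5 * k)) := by
    refine h1.trans (le_of_eq ?_)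
    ring
  have := le_of_mul_le_mul_left h3 (by positivity)
  linarith

lemma nint_le_abs_sub (x : ℝ) (z : ℤ) : nint x ≤ |x - z| := round_le x z

lemma nint_pos_of_irrational {x : ℝ} (hx : Irrational x) : 0 < nint x :=
  abs_pos.mpr (sub_ne_zero.mpr (hx.ne_int _))

lemma exists_pos_le_nint {θ : ℝ} (hθ : Irrational θ) (D : ℕ) :
    ∃ μ : ℝ, 0 < μ ∧ ∀ k : ℕ, 0 < k → k < D → μ ≤ nint (k * θ) := by
  induction D with
  | zero => exact ⟨1, one_pos, fun k _ hk => absurd hk (Nat.not_lt_zero k)⟩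
  | succ D ih =>
    obtain ⟨μ, hμ, h⟩ := ih
    rcases Nat.eq_zero_or_pos D with rfl | hD
    · exact ⟨1, one_pos, fun k hk hk' => by omega⟩
    · refine ⟨min μ (nint (D * θ)),
        lt_min hμ (nint_pos_of_irrational (hθ.natCast_mul hD.ne')), fun k hk hk' => ?_⟩
      rcases Nat.lt_succ_iff_lt_or_eq.mp hk' with h' | rfl
      · exact (min_le_left _ _).trans (h k hk h')
      · exact min_le_right _ _

/-- Good rational approximations `a' / q` to `θ` with large denominator, together with an
approximation `a / b` that has odd denominator and is unimodular to `a' / q`. -/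
lemma exists_unimodular_approx {θ : ℝ} (hθ : Irrational θ) (N : ℕ) :
    ∃ (q b : ℕ) (a a' : ℤ), 0 < q ∧ N ≤ q ∧ b ≤ 2 * q ∧ b.Coprime (2 * q) ∧ a * q - a' * b = 1 ∧
      |q * θ - a'| ≤ 1 / q ∧ |b * θ - a| ≤ 3 / q := by
  obtain ⟨μ, hμ, hμN⟩ := exists_pos_le_nint hθ N
  obtain ⟨n, hn⟩ := exists_nat_one_div_lt hμ
  obtain ⟨x, hx, hxn⟩ := Real.exists_rat_abs_sub_le_and_den_le θ (Nat.succ_pos n)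
  have hq : 0 < x.den := x.den_pos
  have hq' : (0 : ℝ) < x.den := by exact_mod_cast hq
  have happrox : |x.den * θ - x.num| ≤ 1 / ((n.succ : ℝ) + 1) := by
    have h1 : (x.den : ℝ) * θ - x.num = x.den * (θ - x) := by
      have : (x : ℝ) = x.num / x.den := Rat.cast_def x
      rw [this]
      field_simp
    rw [h1, abs_mul, abs_of_pos hq']
    calc _ ≤ x.den * (1 / (((n.succ : ℕ) + 1 : ℝ) * x.den)) := by gcongr
      _ = _ := by field_simp
  have hNq : N ≤ x.den := by
    by_contra! hlt
    have h1 := (hμN x.den hq hlt).trans (nint_le_abs_sub _ x.num)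
    have h2 : 1 / ((n.succ : ℝ) + 1) ≤ 1 / ((n : ℝ) + 1) := by
      gcongr
      exact Nat.le_succ n
    linarith
  have happrox' : |x.den * θ - x.num| ≤ 1 / x.den := by
    refine happrox.trans ?_
    gcongr
    exact_mod_cast hxn.trans (Nat.le_succ _)
  obtain ⟨u, v, huv⟩ : IsCoprime x.num (x.den : ℤ) := by
    rw [Int.isCoprime_iff_gcd_eq_one]
    exact x.reduced
  obtain ⟨b, a, hb, hodd, hab⟩ : ∃ b a : ℤ, (0 ≤ b ∧ b ≤ 2 * x.den) ∧ Odd b ∧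
      a * x.den - x.num * b = 1 := by
    have hqz : (0 : ℤ) < x.den := by exact_mod_cast hq
    have h0 := Int.emod_nonneg (-u) hqz.ne'
    have h1 := Int.emod_lt_of_pos (-u) hqz
    have h2 := Int.emod_add_mul_ediv (-u) x.den
    set b₀ := (-u) % x.den
    set c := (-u) / x.den
    have h3 : (v - x.num * c) * x.den - x.num * b₀ = 1 := by
      linear_combination huv - x.num * h2
    rcases Int.even_or_odd b₀ with he | ho
    · refine ⟨b₀ + x.den, v - x.num * c + x.num, ⟨by omega, by omega⟩, ?_, by
        linear_combination h3⟩
      refine he.add_odd ?_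
      by_contra hne
      rw [Int.not_odd_iff_even] at hne
      have h4 : Even (1 : ℤ) := by
        rw [← h3]
        exact (hne.mul_left _).sub (he.mul_left _)
      exact Int.not_even_one h4
    · exact ⟨b₀, _, ⟨h0, by omega⟩, ho, h3⟩
  lift b to ℕ using hb.1
  have hb2 : b ≤ 2 * x.den := by exact_mod_cast hb.2
  refine ⟨x.den, b, a, x.num, hq, hNq, hb2, ?_, by exact_mod_cast hab, happrox', ?_⟩
  · rw [Nat.coprime_mul_iff_right]
    constructor
    · exact Nat.coprime_two_right.mpr (by exact_mod_cast hodd)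
    · rw [← Nat.isCoprime_iff_coprime]
      exact ⟨-x.num, a, by linear_combination hab⟩
  · have hab' : (a : ℝ) * x.den - x.num * b = 1 := by exact_mod_cast hab
    have h1 : (b : ℝ) * θ - a = (b / x.den) * (x.den * θ - x.num) - 1 / x.den := by
      field_simp
      linear_combination -hab'
    have h2 : (b : ℝ) / x.den ≤ 2 := by
      rw [div_le_iff₀ hq']
      exact_mod_cast hb2
    rw [h1]
    calc _ ≤ |(b / x.den : ℝ) * (x.den * θ - x.num)| + |(1 / x.den : ℝ)| := abs_sub _ _
      _ ≤ 2 * (1 / x.den) + 1 / x.den := by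
          rw [abs_mul, abs_of_nonneg (by positivity : (0 : ℝ) ≤ b / x.den),
            abs_of_nonneg (by positivity : (0 : ℝ) ≤ 1 / x.den)]
          gcongr
      _ = 3 / x.den := by ring

/-- Thue's lemma applied to a solution of `l ^ 2 = r * A`. -/
lemma exists_small_sq_mul (Q r : ℕ) (A l : (ZMod Q)ˣ) (hl : (l : ZMod Q) ^ 2 = r * A) (a : ℤ)
    (ha : (a : ZMod Q) = A) (t : ℕ) (ht : 0 < t) (htQ : t < Q) :
    ∃ k n : ℤ, 0 < k ∧ k ≤ t ∧ n ≠ 0 ∧ |(n : ℝ)| * (t + 1) ≤ Q ∧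
      (Q : ℤ) ∣ n ^ 2 * a - r * k ^ 2 := by
  have : NeZero Q := ⟨by omega⟩
  have hQ : (0 : ℝ) < Q := by exact_mod_cast (by omega : 0 < Q)
  set ν : ℤ := (((A⁻¹ * l : (ZMod Q)ˣ) : ZMod Q).val : ℤ) with hν
  have hνc : (ν : ZMod Q) = ((A⁻¹ * l : (ZMod Q)ˣ) : ZMod Q) := by
    rw [hν, Int.cast_natCast, ZMod.natCast_zmod_val]
  obtain ⟨j, k, hk0, hkt, hjk⟩ := Real.exists_int_int_abs_mul_sub_le ((ν : ℝ) / Q) ht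
  have hcast : ((k * ν - j * Q : ℤ) : ZMod Q) = k * ((A⁻¹ * l : (ZMod Q)ˣ) : ZMod Q) := by
    push_cast
    rw [hνc, ZMod.natCast_self]
    push_cast
    ring
  refine ⟨k, k * ν - j * Q, hk0, hkt, ?_, ?_, ?_⟩
  · intro h0
    rw [h0, Int.cast_zero] at hcast
    have h1 : (k : ZMod Q) = 0 := (Units.mul_left_eq_zero _).mp hcast.symm
    rw [ZMod.intCast_zmod_eq_zero_iff_dvd] at h1
    have := Int.le_of_dvd hk0 h1
    omega
  · have h1 : (((k * ν - j * Q : ℤ) : ℤ) : ℝ) = Q * (k * (ν / Q) - j) := by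
      push_cast
      field_simp
    rw [h1, abs_mul, abs_of_pos hQ, mul_assoc]
    rw [le_div_iff₀ (by positivity)] at hjk
    nlinarith
  · rw [← ZMod.intCast_zmod_eq_zero_iff_dvd]
    push_cast at hcast ⊢
    rw [hcast, ha, mul_pow, mul_pow, hl]
    have hA : ((A⁻¹ : (ZMod Q)ˣ) : ZMod Q) * A = 1 := A.inv_mul
    linear_combination (k ^ 2 * r * (((A⁻¹ : (ZMod Q)ˣ) : ZMod Q) * A + 1)) * hA

lemma exists_nint_sq_mul_le (Q r : ℕ) (hQ : 1 < Q) (A l : (ZMod Q)ˣ)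
    (hl : (l : ZMod Q) ^ 2 = r * A) (a : ℤ) (ha : (a : ZMod Q) = A) (θ : ℝ) :
    ∃ n : ℕ, 0 < n ∧ (n : ℝ) ^ 2 ≤ √Q ^ 3 ∧
      nint ((n : ℝ) ^ 2 * θ) ≤ r / √Q + √Q * |Q * θ - a| := by
  have hQ' : (1 : ℝ) < Q := by exact_mod_cast hQ
  set s := √(Q : ℝ) with hs
  have hs1 : 1 < s := by rw [hs, Real.lt_sqrt zero_le_one]; simpa using hQ'
  have hsQ : s ^ 2 = Q := Real.sq_sqrt (by positivity)
  have hu1 : 1 < √s := by rw [Real.lt_sqrt zero_le_one]; simpa using hs1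
  have hus : √s ^ 2 = s := Real.sq_sqrt (by positivity)
  set t := ⌊√s⌋₊ with ht
  have ht1 : 0 < t := Nat.floor_pos.mpr hu1.le
  have htu : (t : ℝ) ≤ √s := Nat.floor_le (by positivity)
  have hut : √s < t + 1 := Nat.lt_floor_add_one _
  have hts : (t : ℝ) ^ 2 ≤ s := by rw [← hus]; gcongr
  have hst : s ≤ ((t : ℝ) + 1) ^ 2 := by rw [← hus]; gcongr
  have htQ : t < Q := by
    have : (t : ℝ) < Q := by nlinarith
    exact_mod_cast this
  obtain ⟨k, n, hk0, hkt, hn0, hn, z, hz⟩ := exists_small_sq_mul Q r A l hl a ha t ht1 htQ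
  have hcast : ((n.natAbs : ℕ) : ℝ) ^ 2 = (n : ℝ) ^ 2 := by
    rw [Nat.cast_natAbs, Int.cast_abs, sq_abs]
  have hn2 : (n : ℝ) ^ 2 ≤ s ^ 3 := by
    have h1 : (n : ℝ) ^ 2 * ((t : ℝ) + 1) ^ 2 ≤ (s ^ 2) ^ 2 := by
      rw [hsQ, ← sq_abs (n : ℝ), ← mul_pow]
      gcongr
    have h2 : (n : ℝ) ^ 2 * s ≤ s ^ 3 * s := by
      calc _ ≤ (n : ℝ) ^ 2 * ((t : ℝ) + 1) ^ 2 := by gcongr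
        _ ≤ _ := h1
        _ = _ := by ring
    exact le_of_mul_le_mul_right h2 (by positivity)
  have hk2 : (k : ℝ) ^ 2 ≤ s := by
    refine le_trans ?_ hts
    have : (k : ℝ) ≤ t := by exact_mod_cast hkt
    have : (0 : ℝ) < k := by exact_mod_cast hk0
    gcongr
  refine ⟨n.natAbs, Int.natAbs_pos.mpr hn0, hcast ▸ hn2, ?_⟩
  rw [hcast]
  refine (nint_le_abs_sub _ z).trans ?_
  have hz' : (n : ℝ) ^ 2 * a - r * (k : ℝ) ^ 2 = s ^ 2 * z := by
    rw [hsQ]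
    exact_mod_cast hz
  have h1 : (n : ℝ) ^ 2 * θ - z = r * (k : ℝ) ^ 2 / s ^ 2 + (n : ℝ) ^ 2 / s ^ 2 * (Q * θ - a) := by
    rw [← hsQ]
    field_simp
    linear_combination hz'
  rw [h1]
  refine (abs_add_le _ _).trans (add_le_add ?_ ?_)
  · rw [abs_of_nonneg (by positivity), div_le_div_iff₀ (by positivity) (by positivity)]
    calc _ ≤ (r : ℝ) * s * s := by gcongr
      _ = _ := by ring
  · rw [abs_mul, abs_of_nonneg (by positivity)]
    gcongr
    rw [div_le_iff₀ (by positivity)]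
    calc _ ≤ s ^ 3 := hn2
      _ = _ := by ring

lemma exists_pow_le_and_lt_pow (m h : ℕ) (hm : m ≠ 0) : ∃ M : ℕ, M ^ m ≤ h ∧ h < (M + 1) ^ m := by
  have hex : ∃ M : ℕ, h < (M + 1) ^ m :=
    ⟨h, (Nat.lt_succ_self h).trans_le (Nat.le_self_pow hm _)⟩
  classical
  refine ⟨Nat.find hex, ?_, Nat.find_spec hex⟩
  rcases hM : Nat.find hex with _ | M
  · simp [hm]
  · exact not_lt.mp (Nat.find_min hex (by omega : M < Nat.find hex))

lemma rpow_mul_le_of_bounds {n s M x e : ℝ} {m : ℕ} (hn : 1 ≤ n) (hM : 1 ≤ M) (hs : 0 < s)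
    (he : 0 ≤ 2 / 3 - e) (hem : 4 ≤ e * m) (hns : n ^ 2 ≤ s ^ 3) (hMs : M ^ m ≤ s ^ 2)
    (hx : x ≤ 21 * M ^ 2 / s) : n ^ (2 / 3 - e) * x ≤ 21 / M := by
  have he0 : 0 ≤ e := by
    by_contra! h
    have := mul_nonneg_of_nonpos_of_nonpos h.le (neg_nonpos.mpr (Nat.cast_nonneg (α := ℝ) m))
    linarith
  have h1 : n ^ (2 / 3 - e) ≤ s ^ (1 - 3 / 2 * e) := by
    calc n ^ (2 / 3 - e) = (n ^ 2) ^ ((2 / 3 - e) / 2) := by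
          rw [← Real.rpow_natCast, ← Real.rpow_mul (by positivity)]
          congr 1
          push_cast
          ring
      _ ≤ (s ^ 3) ^ ((2 / 3 - e) / 2) := by
          gcongr
      _ = _ := by
          rw [← Real.rpow_natCast, ← Real.rpow_mul (by positivity)]
          congr 1
          push_cast
          ring
  have h2 : M ^ 3 ≤ s ^ (3 / 2 * e) := by
    calc M ^ 3 = M ^ (3 : ℝ) := by norm_cast
      _ ≤ M ^ (m * (3 / 4 * e)) := Real.rpow_le_rpow_of_exponent_le hM (by linarith)
      _ = (M ^ m) ^ (3 / 4 * e) := by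
          rw [Real.rpow_mul (by positivity), Real.rpow_natCast]
      _ ≤ (s ^ 2) ^ (3 / 4 * e) := by gcongr
      _ = _ := by
          rw [← Real.rpow_natCast, ← Real.rpow_mul (by positivity)]
          congr 1
          push_cast
          ring
  have h3 : s ^ (1 - 3 / 2 * e) * s ^ (3 / 2 * e) = s := by
    rw [← Real.rpow_add hs]
    simp
  have h4 : s ^ (1 - 3 / 2 * e) * M ^ 3 ≤ s := by
    calc _ ≤ s ^ (1 - 3 / 2 * e) * s ^ (3 / 2 * e) := by gcongr
      _ = s := h3
  calc n ^ (2 / 3 - e) * x ≤ n ^ (2 / 3 - e) * (21 * M ^ 2 / s) := by gcongr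
    _ ≤ s ^ (1 - 3 / 2 * e) * (21 * M ^ 2 / s) := by gcongr
    _ ≤ 21 / M := by
        rw [mul_div_assoc', div_le_div_iff₀ hs (by positivity)]
        linarith

lemma exists_sq_nint_lt {θ : ℝ} (hθ : Irrational θ) {e : ℝ} (he : 0 < e) (he' : e ≤ 2 / 3)
    {δ : ℝ} (hδ : 0 < δ) :
    ∃ n : ℕ, 0 < n ∧ (n : ℝ) ^ (2 / 3 - e) * nint ((n : ℝ) ^ 2 * θ) < δ := by
  obtain ⟨m, hm⟩ := exists_nat_ge (4 / e)
  rw [div_le_iff₀ he] at hm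
  have hm0 : m ≠ 0 := by
    rintro rfl
    norm_num at hm
  obtain ⟨M₀, hM₀⟩ := exists_good_modulus m
  obtain ⟨N, hN⟩ := exists_nat_gt (21 / δ)
  obtain ⟨q, b, a, a', hq0, hqN, hb, hbq, hab, hqθ, hbθ⟩ :=
    exists_unimodular_approx hθ ((M₀ + N + 1) ^ m)
  obtain ⟨M, hMh, hhM⟩ := exists_pow_le_and_lt_pow m (2 * q) hm0
  have hMlarge : M₀ + N + 1 ≤ M := by
    have h1 : (M₀ + N + 1) ^ m < (M + 1) ^ m := by omega
    exact Nat.lt_succ_iff.mp (lt_of_pow_lt_pow_left₀ m (Nat.zero_le _) h1)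
  obtain ⟨y, hy, hgood⟩ := hM₀ M (by omega) b (2 * q) (even_two_mul q) hbq (by omega) hb hhM
  rw [Finset.mem_Icc] at hy
  obtain ⟨Q, hQ⟩ : ∃ Q, Q = b + y * (2 * q) := ⟨_, rfl⟩
  rw [← hQ] at hgood
  have hqQ : 2 * q ≤ Q := by
    have := Nat.mul_le_mul_right (2 * q) hy.1
    omega
  have hcop : IsCoprime (a + 2 * y * a') (Q : ℤ) :=
    ⟨q, -a', by rw [hQ]; push_cast; linear_combination hab⟩
  obtain ⟨A, hA⟩ := (ZMod.coe_int_isUnit_iff_isCoprime _ Q).mpr hcop.symm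
  obtain ⟨r, hr, l, hl⟩ := hgood A
  obtain ⟨n, hn0, hns, hn⟩ := exists_nint_sq_mul_le Q r (by omega) A l hl _ hA.symm θ
  have hMR : (1 : ℝ) ≤ M := by exact_mod_cast (by omega : 1 ≤ M)
  have hqR : (0 : ℝ) < q := by exact_mod_cast hq0
  have hQR : (0 : ℝ) < Q := by exact_mod_cast (by omega : 0 < Q)
  have hs : 0 < √(Q : ℝ) := Real.sqrt_pos.mpr hQR
  have hsQ : √(Q : ℝ) ^ 2 = Q := Real.sq_sqrt hQR.le
  have hyM : (y : ℝ) ≤ M := by exact_mod_cast hy.2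
  have herr : |Q * θ - ((a + 2 * y * a' : ℤ) : ℝ)| ≤ 5 * M / q := by
    have h1 : (Q : ℝ) * θ - ((a + 2 * y * a' : ℤ) : ℝ) =
        (b * θ - a) + 2 * y * (q * θ - a') := by
      rw [hQ]
      push_cast
      ring
    rw [h1]
    calc _ ≤ |(b : ℝ) * θ - a| + |2 * y * (q * θ - a')| := abs_add_le _ _
      _ ≤ 3 / q + 2 * M * (1 / q) := by
          rw [abs_mul, abs_of_nonneg (by positivity : (0 : ℝ) ≤ 2 * y)]
          gcongr
      _ = (3 + 2 * M) / q := by ring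
      _ ≤ 5 * M / q := by
          gcongr
          linarith
  have hQq : √(Q : ℝ) ^ 2 ≤ 4 * M * q := by
    have h1 : Q ≤ 2 * q + M * (2 * q) := by
      rw [hQ]
      exact add_le_add hb (Nat.mul_le_mul_right _ hy.2)
    have h2 : (Q : ℝ) ≤ 2 * q + M * (2 * q) := by exact_mod_cast h1
    rw [hsQ]
    nlinarith
  have hx : nint ((n : ℝ) ^ 2 * θ) ≤ 21 * M ^ 2 / √Q := by
    refine hn.trans ?_
    have h1 : (r : ℝ) ≤ M ^ 2 := by exact_mod_cast (Finset.mem_Icc.mp hr).2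
    calc _ ≤ (M : ℝ) ^ 2 / √Q + √Q * (5 * M / q) := by gcongr
      _ ≤ (M : ℝ) ^ 2 / √Q + 20 * M ^ 2 / √Q := by
          gcongr
          rw [mul_div_assoc', div_le_div_iff₀ hqR hs]
          nlinarith
      _ = _ := by ring
  have hMs : (M : ℝ) ^ m ≤ √Q ^ 2 := by
    rw [hsQ]
    exact_mod_cast hMh.trans hqQ
  refine ⟨n, hn0, (rpow_mul_le_of_bounds (by exact_mod_cast hn0) hMR hs (by linarith)
    (by linarith) hns hMs hx).trans_lt ?_⟩
  rw [div_lt_iff₀ hδ] at hN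
  rw [div_lt_iff₀ (by positivity)]
  have h1 : (N : ℝ) ≤ M := by exact_mod_cast (by omega : N ≤ M)
  nlinarith

/-- Zaharescu's theorem on approximation by squares. -/
theorem stmt14 (ε : ℝ) (hε : 0 < ε) (θ : ℝ) (hθ : Irrational θ) :
    ∀ ε' : ℝ, 0 < ε' →
      ∃ᶠ q : ℕ in atTop, (q : ℝ) ^ ((2 : ℝ) / 3 - ε) * nint ((q : ℝ) ^ 2 * θ) < ε' := by
  intro ε' hε'
  rw [frequently_atTop]
  intro n₀
  obtain ⟨μ, hμ, hμn⟩ := exists_pos_le_nint hθ (n₀ ^ 2)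
  obtain ⟨n, hn0, hn⟩ := exists_sq_nint_lt hθ (lt_min hε (by norm_num : (0 : ℝ) < 2 / 3))
    (min_le_right _ _) (lt_min hε' hμ)
  have hn1 : (1 : ℝ) ≤ n := by exact_mod_cast hn0
  have hnn : 0 ≤ nint ((n : ℝ) ^ 2 * θ) := abs_nonneg _
  refine ⟨n, ?_, ?_⟩
  · by_contra! hlt
    have h1 := hμn (n ^ 2) (by positivity) (Nat.pow_lt_pow_left hlt two_ne_zero)
    push_cast at h1
    have h2 : 1 ≤ (n : ℝ) ^ (2 / 3 - min ε (2 / 3)) :=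
      Real.one_le_rpow hn1 (sub_nonneg.mpr (min_le_right _ _))
    have h3 := le_mul_of_one_le_left hnn h2
    exact absurd (hn.trans_le (min_le_right _ _)) (not_lt.mpr (h1.trans h3))
  · refine lt_of_le_of_lt ?_ (hn.trans_le (min_le_left _ _))
    gcongr
    exact min_le_left _ _
end

section
/- Let σ = 1.94696... be the largest real root of x⁴ − 2x² − 4x + 1 = 0. There exist real numbers θ^1, θ^2, linearly independent over ℤ together with 1 (no nonzero integer triple (a,b,c) satisfies aθ^1 + bθ^2 + c = 0), such that for every pair of integers (x_1, x_2) with x_1 ≥ 0, x_2 ≥ 0 and max(x_1, x_2) ≥ 2^{200}, one has ‖θ^1 x_1 + θ^2 x_2‖ ≥ 1 / (2^{300} · (max(x_1, x_2))^σ). -/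
open Filter

/-- The scale `2 ^ (10 * 2 ^ i)`, which is squared at every step. -/
def scale (R : Type*) [CommRing R] (i : ℕ) : R := 2 ^ (10 * 2 ^ i)

lemma scale_succ (R : Type*) [CommRing R] (i : ℕ) : scale R (i + 1) = scale R i ^ 2 := by
  unfold scale
  rw [← pow_mul]
  congr 1
  ring

lemma scale_zero (R : Type*) [CommRing R] : scale R 0 = 2 ^ 10 := by
  simp [scale]

lemma scale_ge (i : ℕ) : 1024 ≤ scale ℝ i := by
  induction i with
  | zero => norm_num [scale_zero]
  | succ i ih => rw [scale_succ]; nlinarith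

lemma exists_lt_scale (T : ℝ) : ∃ i, T < scale ℝ i := by
  obtain ⟨n, hn⟩ := exists_nat_gt T
  refine ⟨n, hn.trans_le ?_⟩
  have h : n ≤ 2 ^ (10 * 2 ^ n) :=
    Nat.lt_two_pow_self.le.trans
      (Nat.lt_two_pow_self.le.trans (Nat.pow_le_pow_right (by norm_num) (by omega)))
  unfold scale
  exact_mod_cast h

/-- The linear recursion satisfied by the coordinates of the approximating integer vectors. -/
structure IsLadder {R : Type*} [CommRing R] (e f : ℕ → R) : Prop where
  f_succ : ∀ i, f (i + 1) = e i + scale R i ^ 2 * f i + scale R i ^ 18 * e (i + 1)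
  e_succ : ∀ i, e (i + 2) =
    (scale R i ^ 4 + 1) * e i + ((scale R i ^ 4 + 1) * scale R i ^ 2 - 1) * f i

/-- The triple `(e i, f i, e (i + 1))` of the ladder with prescribed initial values. -/
def ladder (e f g : ℤ) : ℕ → ℤ × ℤ × ℤ
  | 0 => (e, f, g)
  | i + 1 => ((ladder e f g i).2.2,
      (ladder e f g i).1 + scale ℤ i ^ 2 * (ladder e f g i).2.1
        + scale ℤ i ^ 18 * (ladder e f g i).2.2,
      (scale ℤ i ^ 4 + 1) * (ladder e f g i).1
        + ((scale ℤ i ^ 4 + 1) * scale ℤ i ^ 2 - 1) * (ladder e f g i).2.1)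

lemma exists_isLadder (e₀ f₀ e₁ : ℤ) :
    ∃ e f : ℕ → ℤ, IsLadder e f ∧ e 0 = e₀ ∧ f 0 = f₀ ∧ e 1 = e₁ :=
  ⟨fun i => (ladder e₀ f₀ e₁ i).1, fun i => (ladder e₀ f₀ e₁ i).2.1,
    ⟨fun _ => rfl, fun _ => rfl⟩, rfl, rfl, rfl⟩

lemma IsLadder.cast {e f : ℕ → ℤ} (h : IsLadder e f) :
    IsLadder (fun i => (e i : ℝ)) (fun i => (f i : ℝ)) := by
  constructor
  · intro i; simp only [h.f_succ, scale]; push_cast; ring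
  · intro i; simp only [h.e_succ, scale]; push_cast; ring

/-- The values of the linear form with coefficients `(-θ₁, θ₂, 1)` along three ladders. -/
lemma IsLadder.form {xe xf ye yf ze zf : ℕ → ℝ} (hx : IsLadder xe xf) (hy : IsLadder ye yf)
    (hz : IsLadder ze zf) (θ₁ θ₂ : ℝ) :
    IsLadder (fun i => ze i - θ₁ * xe i + θ₂ * ye i) (fun i => zf i - θ₁ * xf i + θ₂ * yf i) := by
  constructor
  · intro i; simp only [hx.f_succ, hy.f_succ, hz.f_succ]; ring
  · intro i; simp only [hx.e_succ, hy.e_succ, hz.e_succ]; ring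

lemma IsLadder.lower {e f : ℕ → ℝ} (h : IsLadder e f) (he : scale ℝ 0 ^ 5 ≤ e 0)
    (hf : scale ℝ 0 ^ 14 ≤ f 0) (hg : scale ℝ 1 ^ 5 ≤ e 1) (i : ℕ) :
    scale ℝ i ^ 5 ≤ e i ∧ scale ℝ i ^ 14 ≤ f i ∧ scale ℝ (i + 1) ^ 5 ≤ e (i + 1) := by
  induction i with
  | zero => exact ⟨he, hf, hg⟩
  | succ i ih =>
    obtain ⟨h1, h2, h3⟩ := ih
    refine ⟨h3, ?_, ?_⟩
    · rw [h.f_succ i]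
      rw [scale_succ] at h3 ⊢
      have hN := scale_ge i
      set N := scale ℝ i
      have e1 : 0 ≤ e i := le_trans (by positivity) h1
      have e2 : 0 ≤ N ^ 2 * f i := mul_nonneg (by positivity) (le_trans (by positivity) h2)
      have e3 : N ^ 18 * (N ^ 2) ^ 5 ≤ N ^ 18 * e (i + 1) := by gcongr
      linear_combination e1 + e2 + e3
    · rw [h.e_succ i]
      rw [scale_succ, scale_succ]
      have hN := scale_ge i
      set N := scale ℝ i
      have e1 : 0 ≤ (N ^ 4 + 1) * e i := mul_nonneg (by positivity) (le_trans (by positivity) h1)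
      have e2 : 0 ≤ (N ^ 2 - 1) * f i := mul_nonneg (by nlinarith) (le_trans (by positivity) h2)
      have e3 : N ^ 6 * N ^ 14 ≤ N ^ 6 * f i := by gcongr
      linear_combination e1 + e2 + e3

lemma IsLadder.upper {e f : ℕ → ℝ} (h : IsLadder e f)
    (he : scale ℝ 0 * e 0 ≤ (3 * scale ℝ 0 - 1) * scale ℝ 0 ^ 5)
    (hf : 2 * scale ℝ 0 * f 0 ≤ (6 * scale ℝ 0 - 1) * scale ℝ 0 ^ 14)
    (hg : scale ℝ 1 * e 1 ≤ (3 * scale ℝ 1 - 1) * scale ℝ 1 ^ 5) (i : ℕ) :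
    scale ℝ i * e i ≤ (3 * scale ℝ i - 1) * scale ℝ i ^ 5 ∧
    2 * scale ℝ i * f i ≤ (6 * scale ℝ i - 1) * scale ℝ i ^ 14 ∧
    scale ℝ (i + 1) * e (i + 1) ≤ (3 * scale ℝ (i + 1) - 1) * scale ℝ (i + 1) ^ 5 := by
  induction i with
  | zero => exact ⟨he, hf, hg⟩
  | succ i ih =>
    obtain ⟨h1, h2, h3⟩ := ih
    refine ⟨h3, ?_, ?_⟩
    · rw [h.f_succ i]
      rw [scale_succ] at h3 ⊢
      have hN := scale_ge i
      set N := scale ℝ i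
      have e1 : 2 * N * (N * e i) ≤ 2 * N * ((3 * N - 1) * N ^ 5) := by gcongr
      have e2 : N ^ 3 * (2 * N * f i) ≤ N ^ 3 * ((6 * N - 1) * N ^ 14) := by gcongr
      have e3 : 2 * N ^ 18 * (N ^ 2 * e (i + 1)) ≤
          2 * N ^ 18 * ((3 * N ^ 2 - 1) * (N ^ 2) ^ 5) := by gcongr
      have k1 : 12 * N ^ 18 ≤ N ^ 28 := by
        have : 12 ≤ N ^ 10 := le_trans (by norm_num) (pow_le_pow_left₀ (by norm_num) hN 10)
        nlinarith [pow_pos (show 0 < N by linarith) 18]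
      have k2 : N ^ 7 ≤ N ^ 18 := pow_le_pow_right₀ (by linarith) (by norm_num)
      have k3 : 0 ≤ N ^ 6 := by positivity
      have k4 : 0 ≤ N ^ 17 := by positivity
      linear_combination e1 + e2 + e3 + 2 * k3 + k4 + 6 * k2 + k1
    · rw [h.e_succ i]
      rw [scale_succ, scale_succ]
      have hN := scale_ge i
      set N := scale ℝ i
      have e1 : (2 * N ^ 3 * (N ^ 4 + 1)) * (N * e i) ≤
          (2 * N ^ 3 * (N ^ 4 + 1)) * ((3 * N - 1) * N ^ 5) := by gcongr
      have k0 : 0 ≤ N ^ 6 + N ^ 2 - 1 := by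
        have := pow_nonneg (show 0 ≤ N by linarith) 6
        nlinarith
      have e2 : (N ^ 3 * (N ^ 6 + N ^ 2 - 1)) * (2 * N * f i) ≤
          (N ^ 3 * (N ^ 6 + N ^ 2 - 1)) * ((6 * N - 1) * N ^ 14) := by gcongr
      have k1 : 1024 * N ^ 22 ≤ N ^ 23 := by
        nlinarith [pow_pos (show 0 < N by linarith) 22]
      have k2 : N ^ 13 ≤ N ^ 22 := pow_le_pow_right₀ (by linarith) (by norm_num)
      have k3 : N ^ 20 ≤ N ^ 22 := pow_le_pow_right₀ (by linarith) (by norm_num)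
      have k4 : N ^ 17 ≤ N ^ 18 := pow_le_pow_right₀ (by linarith) (by norm_num)
      have k5 : N ^ 9 ≤ N ^ 22 := pow_le_pow_right₀ (by linarith) (by norm_num)
      have k6 : 0 ≤ N ^ 8 := by positivity
      have k7 : 0 ≤ N ^ 12 := by positivity
      have k8 : 0 ≤ N ^ 18 := by positivity
      have k9 : N ^ 17 ≤ N ^ 22 := pow_le_pow_right₀ (by linarith) (by norm_num)
      have k10 : 0 ≤ N ^ 19 := by positivity
      have k11 : 0 ≤ N ^ 22 := by positivity
      nlinarith

/-- The signed area spanned by `(e i, f i)`, `(f i, e (i + 1))` or `(e i, e (i + 1))`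
in two ladders of coordinates. -/
lemma area_recursion {xe xf ye yf : ℕ → ℝ} (hx : IsLadder xe xf) (hy : IsLadder ye yf) (i : ℕ) :
    xe (i + 1) * yf (i + 1) - xf (i + 1) * ye (i + 1) =
      -((xe i * ye (i + 1) - xe (i + 1) * ye i)
        + scale ℝ i ^ 2 * (xf i * ye (i + 1) - xe (i + 1) * yf i)) ∧
    xf (i + 1) * ye (i + 2) - xe (i + 2) * yf (i + 1) =
      -((xe i * yf i - xf i * ye i)
        + scale ℝ i ^ 18 * (scale ℝ i ^ 4 + 1) * (xe i * ye (i + 1) - xe (i + 1) * ye i)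
        + scale ℝ i ^ 18 * ((scale ℝ i ^ 4 + 1) * scale ℝ i ^ 2 - 1)
          * (xf i * ye (i + 1) - xe (i + 1) * yf i)) ∧
    xe (i + 1) * ye (i + 2) - xe (i + 2) * ye (i + 1) =
      -((scale ℝ i ^ 4 + 1) * (xe i * ye (i + 1) - xe (i + 1) * ye i)
        + ((scale ℝ i ^ 4 + 1) * scale ℝ i ^ 2 - 1)
          * (xf i * ye (i + 1) - xe (i + 1) * yf i)) := by
  rw [hx.f_succ, hy.f_succ, hx.e_succ, hy.e_succ]
  refine ⟨by ring, by ring, by ring⟩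

lemma area_bounds {xe xf ye yf : ℕ → ℝ} (hx : IsLadder xe xf) (hy : IsLadder ye yf)
    (h0 : 0 < xe 0 * yf 0 - xf 0 * ye 0)
    (h1 : scale ℝ 0 ^ 24 ≤ xf 0 * ye 1 - xe 1 * yf 0)
    (h2 : 0 < xe 0 * ye 1 - xe 1 * ye 0) (i : ℕ) :
    0 < (-1) ^ i * (xe i * yf i - xf i * ye i) ∧
    scale ℝ i ^ 24 ≤ (-1) ^ i * (xf i * ye (i + 1) - xe (i + 1) * yf i) ∧
    0 < (-1) ^ i * (xe i * ye (i + 1) - xe (i + 1) * ye i) := by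
  induction i with
  | zero => simpa only [pow_zero, one_mul, zero_add] using ⟨h0, h1, h2⟩
  | succ i ih =>
    obtain ⟨a1, a2, a3⟩ := ih
    obtain ⟨r1, r2, r3⟩ := area_recursion hx hy i
    have hN := scale_ge i
    rw [r1, r2, r3, scale_succ, pow_succ (-1 : ℝ)]
    set N := scale ℝ i
    set A := xe i * yf i - xf i * ye i
    set B := xf i * ye (i + 1) - xe (i + 1) * yf i
    set D := xe i * ye (i + 1) - xe (i + 1) * ye i
    set s := (-1 : ℝ) ^ i
    have hN0 : 0 < N := by linarith
    have b0 : 0 < s * B := lt_of_lt_of_le (by positivity) a2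
    have hc : N ^ 6 ≤ (N ^ 4 + 1) * N ^ 2 - 1 := by nlinarith
    have hc0 : 0 < (N ^ 4 + 1) * N ^ 2 - 1 := lt_of_lt_of_le (by positivity) hc
    refine ⟨?_, ?_, ?_⟩
    · have : 0 < N ^ 2 * (s * B) := by positivity
      linarith
    · have t1 : N ^ 18 * N ^ 6 * N ^ 24 ≤ N ^ 18 * ((N ^ 4 + 1) * N ^ 2 - 1) * (s * B) := by gcongr
      have t2 : 0 < N ^ 18 * (N ^ 4 + 1) * (s * D) := by positivity
      linear_combination t1 + t2 + a1
    · have t1 : 0 < (N ^ 4 + 1) * (s * D) := by positivity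
      have t2 : 0 < ((N ^ 4 + 1) * N ^ 2 - 1) * (s * B) := by positivity
      linarith

/-- The determinant of three ladders is constant up to sign. -/
lemma det_eq {xe xf ye yf ze zf : ℕ → ℝ} (hx : IsLadder xe xf) (hy : IsLadder ye yf)
    (hz : IsLadder ze zf) (i : ℕ) :
    ze i * ((-1) ^ i * (xf i * ye (i + 1) - xe (i + 1) * yf i))
      - zf i * ((-1) ^ i * (xe i * ye (i + 1) - xe (i + 1) * ye i))
      + ze (i + 1) * ((-1) ^ i * (xe i * yf i - xf i * ye i)) =
    ze 0 * (xf 0 * ye 1 - xe 1 * yf 0) - zf 0 * (xe 0 * ye 1 - xe 1 * ye 0)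
      + ze 1 * (xe 0 * yf 0 - xf 0 * ye 0) := by
  induction i with
  | zero => simp
  | succ i ih =>
    obtain ⟨r1, r2, r3⟩ := area_recursion hx hy i
    rw [← ih, r1, r2, r3, hz.f_succ, hz.e_succ]
    ring

lemma IsLadder.backward {e f : ℕ → ℝ} (h : IsLadder e f) (i : ℕ) :
    e i = (scale ℝ i ^ 2 * (scale ℝ i ^ 4 + 1) - 1) * (scale ℝ i ^ 18 * e (i + 1) - f (i + 1))
      + scale ℝ i ^ 2 * e (i + 2) ∧
    f i = -((scale ℝ i ^ 4 + 1) * (scale ℝ i ^ 18 * e (i + 1) - f (i + 1)) + e (i + 2)) := by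
  rw [h.f_succ, h.e_succ]
  constructor <;> ring

lemma IsLadder.sign_backward {e f : ℕ → ℝ} (h : IsLadder e f) (i : ℕ) (h1 : 0 ≤ e (i + 1))
    (h2 : f (i + 1) ≤ 0) (h3 : 0 ≤ e (i + 2)) : 0 ≤ e i ∧ f i ≤ 0 := by
  obtain ⟨k1, k2⟩ := h.backward i
  have hN := scale_ge i
  set N := scale ℝ i
  have hN0 : 0 < N := by linarith
  have t0 : 0 ≤ N ^ 18 * e (i + 1) - f (i + 1) := by
    have : 0 ≤ N ^ 18 * e (i + 1) := by positivity
    linarith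
  have hc : 0 ≤ N ^ 2 * (N ^ 4 + 1) - 1 := by
    have := pow_pos hN0 6
    nlinarith
  constructor
  · rw [k1]; positivity
  · rw [k2]
    have : 0 ≤ (N ^ 4 + 1) * (N ^ 18 * e (i + 1) - f (i + 1)) := by positivity
    linarith

lemma IsLadder.ratio_bounds {e f : ℕ → ℝ} (h : IsLadder e f) (i : ℕ) (h1 : 0 ≤ e (i + 1))
    (h2 : f (i + 1) ≤ 0) (h3 : 0 ≤ e (i + 2)) :
    (scale ℝ i ^ 2 - 1) * (-f i) ≤ e i ∧ e i ≤ scale ℝ i ^ 2 * (-f i) ∧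
      scale ℝ i ^ 24 * e (i + 1) ≤ e i := by
  obtain ⟨k1, k2⟩ := h.backward i
  have hN := scale_ge i
  rw [k1, k2]
  set N := scale ℝ i
  have hN0 : 0 < N := by linarith
  have t0 : 0 ≤ N ^ 18 * e (i + 1) := by positivity
  have t1 : 0 ≤ N ^ 4 * (N ^ 18 * e (i + 1) - f (i + 1)) := mul_nonneg (by positivity) (by linarith)
  have t2 : 0 ≤ (N ^ 2 - 1) * (N ^ 18 * e (i + 1)) := mul_nonneg (by nlinarith) t0
  have t3 : 0 ≤ (N ^ 6 + N ^ 2 - 1) * (-f (i + 1)) :=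
    mul_nonneg (by have := pow_pos hN0 6; nlinarith) (by linarith)
  have t4 : 0 ≤ N ^ 2 * e (i + 2) := by positivity
  refine ⟨?_, ?_, ?_⟩
  · linear_combination t1 + h3
  · linear_combination t0 + h2
  · linear_combination t2 + t3 + t4

lemma IsLadder.span_step {xe xf : ℕ → ℤ} (hx : IsLadder xe xf) (i : ℕ) (α β γ : ℤ) :
    α * xe i + β * xf i + γ * xe (i + 1) =
      (γ + α * (scale ℤ i ^ 18 * (scale ℤ i ^ 2 * (scale ℤ i ^ 4 + 1) - 1))
        - β * (scale ℤ i ^ 18 * (scale ℤ i ^ 4 + 1))) * xe (i + 1)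
      + (α * (1 - scale ℤ i ^ 2 * (scale ℤ i ^ 4 + 1)) + β * (scale ℤ i ^ 4 + 1)) * xf (i + 1)
      + (α * scale ℤ i ^ 2 - β) * xe (i + 2) := by
  rw [hx.f_succ, hx.e_succ]
  ring

lemma exists_coeffs {xe xf ye yf ze zf : ℕ → ℤ} (hx : IsLadder xe xf) (hy : IsLadder ye yf)
    (hz : IsLadder ze zf) {x y z : ℤ}
    (h0 : ∃ α β γ : ℤ, x = α * xe 0 + β * xf 0 + γ * xe 1 ∧
      y = α * ye 0 + β * yf 0 + γ * ye 1 ∧ z = α * ze 0 + β * zf 0 + γ * ze 1) (i : ℕ) :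
    ∃ α β γ : ℤ, x = α * xe i + β * xf i + γ * xe (i + 1) ∧
      y = α * ye i + β * yf i + γ * ye (i + 1) ∧ z = α * ze i + β * zf i + γ * ze (i + 1) := by
  induction i with
  | zero => exact h0
  | succ i ih =>
    obtain ⟨α, β, γ, h1, h2, h3⟩ := ih
    exact ⟨_, _, _, h1.trans (hx.span_step i α β γ), h2.trans (hy.span_step i α β γ),
      h3.trans (hz.span_step i α β γ)⟩

lemma eq_zero_of_sector {u₁ u₂ α : ℝ} (hu₁ : 0 < u₁) (hu₂ : 0 < u₂) (h₁ : α * u₁ ≤ 0)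
    (h₂ : 0 ≤ α * u₂) : α = 0 :=
  le_antisymm (nonpos_of_mul_nonpos_left h₁ hu₁) (nonneg_of_mul_nonneg_left h₂ hu₂)

lemma le_mul_of_sector {u₁ u₂ v₁ v₂ m M α β : ℝ} (hu₁ : 0 < u₁) (hu₂ : 0 < u₂) (hM₁ : u₁ ≤ M)
    (hM₂ : u₂ ≤ M) (hm : 0 < m) (hv₁ : m ≤ v₁) (hv₂ : m ≤ v₂) (hβ : β ≠ 0)
    (h₁ : α * u₁ + β * v₁ ≤ 0) (h₂ : 0 ≤ α * u₂ + β * v₂) :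
    α * β < 0 ∧ |β| * m ≤ |α| * M := by
  rcases lt_or_gt_of_ne hβ with hb | hb
  · have hα : 0 < α := by
      by_contra! hα
      nlinarith [mul_nonneg (neg_nonneg.2 hα) hu₂.le, mul_pos (neg_pos.2 hb) (hm.trans_le hv₂)]
    rw [abs_of_neg hb, abs_of_pos hα]
    exact ⟨by nlinarith, by nlinarith⟩
  · have hα : α < 0 := by
      by_contra! hα
      nlinarith [mul_nonneg hα hu₁.le, mul_pos hb (hm.trans_le hv₁)]
    rw [abs_of_pos hb, abs_of_neg hα]
    exact ⟨by nlinarith, by nlinarith⟩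

lemma abs_mul_sub_mul {u v P Q : ℝ} (huv : u * v < 0) (hP : 0 ≤ P) (hQ : 0 ≤ Q) :
    |u * P - v * Q| = |u| * P + |v| * Q := by
  rcases mul_neg_iff.1 huv with ⟨hu, hv⟩ | ⟨hu, hv⟩
  · have h1 := mul_nonneg hu.le hP
    have h2 := mul_nonneg (neg_pos.2 hv).le hQ
    rw [abs_of_pos hu, abs_of_neg hv, abs_of_nonneg (by linarith)]
    ring
  · have h1 := mul_nonneg (neg_pos.2 hu).le hP
    have h2 := mul_nonneg hv.le hQ
    rw [abs_of_neg hu, abs_of_pos hv, abs_of_nonpos (by linarith)]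
    ring

/-- The metric data of a basis `E, F, G` of `ℤ³` adapted to a linear form: the first two
coordinates of `E = (-xe, ye, _)`, `F = (-xf, yf, _)` and `G = (-xg, yg, _)`, the values `p`, `-q`,
`r` of the form on them, and the areas `A`, `B`, `D` spanned by the pairs of projections. -/
structure Frame (N xe xf xg ye yf yg p q r A B D s : ℝ) : Prop where
  hN : 1024 ≤ N
  xe_lower : N ^ 5 ≤ xe
  xe_upper : xe ≤ 3 * N ^ 5
  ye_lower : N ^ 5 ≤ ye
  ye_upper : ye ≤ 3 * N ^ 5
  xf_lower : N ^ 14 ≤ xf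
  xf_upper : xf ≤ 3 * N ^ 14
  yf_lower : N ^ 14 ≤ yf
  yf_upper : yf ≤ 3 * N ^ 14
  xg_lower : N ^ 10 ≤ xg
  xg_upper : xg ≤ 3 * N ^ 10
  yg_lower : N ^ 10 ≤ yg
  yg_upper : yg ≤ 3 * N ^ 10
  abs_s : |s| = 1
  A_eq : A = s * (xe * yf - xf * ye)
  B_eq : B = s * (xf * yg - xg * yf)
  D_eq : D = s * (xe * yg - xg * ye)
  A_pos : 0 < A
  A_upper : A ≤ 20 * N ^ 13
  B_lower : N ^ 24 ≤ B
  D_pos : 0 < D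
  p_nonneg : 0 ≤ p
  q_nonneg : 0 ≤ q
  r_nonneg : 0 ≤ r
  q_ratio : (N ^ 2 - 1) * q ≤ p
  p_ratio : p ≤ N ^ 2 * q
  r_ratio : N ^ 24 * r ≤ p
  det_eq : p * B + q * D + r * A = 1

lemma abs_area_le {u₁ u₂ s M x y T : ℝ} (hs : |s| = 1) (h₁ : 0 ≤ u₁) (h₂ : 0 ≤ u₂) (hM₁ : u₁ ≤ M)
    (hM₂ : u₂ ≤ M) (hx : |x| ≤ T) (hy : |y| ≤ T) : |s * (u₁ * y - u₂ * x)| ≤ 2 * M * T := by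
  rw [abs_mul, hs, one_mul]
  have hT : 0 ≤ T := (abs_nonneg x).trans hx
  have hM : 0 ≤ M := h₁.trans hM₁
  calc |u₁ * y - u₂ * x| ≤ |u₁ * y| + |u₂ * x| := abs_sub _ _
    _ = u₁ * |y| + u₂ * |x| := by rw [abs_mul, abs_mul, abs_of_nonneg h₁, abs_of_nonneg h₂]
    _ ≤ M * T + M * T := by gcongr
    _ = 2 * M * T := by ring

namespace Frame

variable {N xe xf xg ye yf yg p q r A B D s : ℝ}

lemma pos (h : Frame N xe xf xg ye yf yg p q r A B D s) : 0 < N := by linarith [h.hN]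

lemma E_pos (h : Frame N xe xf xg ye yf yg p q r A B D s) : 0 < xe ∧ 0 < ye := by
  have := pow_pos h.pos 5
  exact ⟨by linarith [h.xe_lower], by linarith [h.ye_lower]⟩

lemma F_pos (h : Frame N xe xf xg ye yf yg p q r A B D s) : 0 < xf ∧ 0 < yf := by
  have := pow_pos h.pos 14
  exact ⟨by linarith [h.xf_lower], by linarith [h.yf_lower]⟩

lemma G_pos (h : Frame N xe xf xg ye yf yg p q r A B D s) : 0 < xg ∧ 0 < yg := by
  have := pow_pos h.pos 10
  exact ⟨by linarith [h.xg_lower], by linarith [h.yg_lower]⟩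

lemma B_pos (h : Frame N xe xf xg ye yf yg p q r A B D s) : 0 < B :=
  lt_of_lt_of_le (pow_pos h.pos 24) h.B_lower

lemma B_upper (h : Frame N xe xf xg ye yf yg p q r A B D s) : B ≤ 18 * N ^ 24 := by
  have k := abs_area_le h.abs_s h.G_pos.1.le h.G_pos.2.le h.xg_upper h.yg_upper
    (x := xf) (y := yf) (T := 3 * N ^ 14)
    (by rw [abs_of_pos h.F_pos.1]; exact h.xf_upper)
    (by rw [abs_of_pos h.F_pos.2]; exact h.yf_upper)
  have := (abs_le.1 k).1
  rw [h.B_eq]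
  linear_combination this

lemma D_upper (h : Frame N xe xf xg ye yf yg p q r A B D s) : D ≤ 18 * N ^ 15 := by
  have k := abs_area_le h.abs_s h.G_pos.1.le h.G_pos.2.le h.xg_upper h.yg_upper
    (x := xe) (y := ye) (T := 3 * N ^ 5)
    (by rw [abs_of_pos h.E_pos.1]; exact h.xe_upper)
    (by rw [abs_of_pos h.E_pos.2]; exact h.ye_upper)
  have := (abs_le.1 k).1
  rw [h.D_eq]
  linear_combination this

lemma q_le_p (h : Frame N xe xf xg ye yf yg p q r A B D s) : q ≤ p := by
  have : 0 ≤ (N ^ 2 - 2) * q := mul_nonneg (by nlinarith [h.hN]) h.q_nonneg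
  linarith [h.q_ratio]

lemma r_le_p (h : Frame N xe xf xg ye yf yg p q r A B D s) : r ≤ p := by
  have : 1 ≤ N ^ 24 := one_le_pow₀ (by linarith [h.hN])
  nlinarith [h.r_ratio, h.r_nonneg]

lemma p_upper (h : Frame N xe xf xg ye yf yg p q r A B D s) : p * N ^ 24 ≤ 1 := by
  have h1 := mul_nonneg h.q_nonneg h.D_pos.le
  have h2 := mul_nonneg h.r_nonneg h.A_pos.le
  have h3 := mul_le_mul_of_nonneg_left h.B_lower h.p_nonneg
  linarith [h.det_eq]

lemma p_lower (h : Frame N xe xf xg ye yf yg p q r A B D s) : 1 ≤ 20 * (p * N ^ 24) := by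
  have h1 := mul_le_mul_of_nonneg_right h.q_le_p h.D_pos.le
  have h2 := mul_le_mul_of_nonneg_right h.r_le_p h.A_pos.le
  have h3 : B + D + A ≤ 20 * N ^ 24 := by
    have k0 := h.hN
    have k1 : N ^ 15 * 1024 ≤ N ^ 15 * N ^ 9 := by
      have : (1024 : ℝ) ≤ N ^ 9 := le_trans (by norm_num) (pow_le_pow_left₀ (by norm_num) k0 9)
      have := h.pos
      gcongr
    have k2 : N ^ 13 ≤ N ^ 15 := pow_le_pow_right₀ (by linarith) (by norm_num)
    have k3 := pow_pos h.pos 15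
    linarith [h.A_upper, h.B_upper, h.D_upper]
  have h4 := mul_le_mul_of_nonneg_left h3 h.p_nonneg
  linarith [h.det_eq]

lemma q_upper (h : Frame N xe xf xg ye yf yg p q r A B D s) : q * N ^ 26 ≤ 2 := by
  have h1 : N ^ 2 * q ≤ 2 * p := by
    have : 0 ≤ (N ^ 2 - 2) * q := mul_nonneg (by nlinarith [h.hN]) h.q_nonneg
    linarith [h.q_ratio]
  have h2 := mul_le_mul_of_nonneg_left h1 (pow_pos h.pos 24).le
  linarith [h.p_upper]

lemma q_lower (h : Frame N xe xf xg ye yf yg p q r A B D s) : 1 ≤ 20 * (q * N ^ 26) := by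
  have h2 := mul_le_mul_of_nonneg_left h.p_ratio (pow_pos h.pos 24).le
  linarith [h.p_lower]

lemma r_upper (h : Frame N xe xf xg ye yf yg p q r A B D s) : r * N ^ 48 ≤ 1 := by
  have h2 := mul_le_mul_of_nonneg_left h.r_ratio (pow_pos h.pos 24).le
  linarith [h.p_upper]

variable {α β γ x y T : ℝ}

lemma abs_area_E (h : Frame N xe xf xg ye yf yg p q r A B D s)
    (hx : x = α * xe + β * xf + γ * xg) (hy : y = α * ye + β * yf + γ * yg)
    (hxT : |x| ≤ T) (hyT : |y| ≤ T) : |β * A + γ * D| ≤ 6 * N ^ 5 * T := by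
  have k := abs_area_le h.abs_s h.E_pos.1.le h.E_pos.2.le h.xe_upper h.ye_upper hxT hyT
  rw [show β * A + γ * D = s * (xe * y - ye * x) by rw [hx, hy, h.A_eq, h.D_eq]; ring]
  linarith

lemma abs_area_F (h : Frame N xe xf xg ye yf yg p q r A B D s)
    (hx : x = α * xe + β * xf + γ * xg) (hy : y = α * ye + β * yf + γ * yg)
    (hxT : |x| ≤ T) (hyT : |y| ≤ T) : |α * A - γ * B| ≤ 6 * N ^ 14 * T := by
  have k := abs_area_le h.abs_s h.F_pos.1.le h.F_pos.2.le h.xf_upper h.yf_upper hxT hyT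
  rw [← abs_neg, show -(α * A - γ * B) = s * (xf * y - yf * x) by rw [hx, hy, h.A_eq, h.B_eq]; ring]
  linarith

lemma abs_area_G (h : Frame N xe xf xg ye yf yg p q r A B D s)
    (hx : x = α * xe + β * xf + γ * xg) (hy : y = α * ye + β * yf + γ * yg)
    (hxT : |x| ≤ T) (hyT : |y| ≤ T) : |α * D + β * B| ≤ 6 * N ^ 10 * T := by
  have k := abs_area_le h.abs_s h.G_pos.1.le h.G_pos.2.le h.xg_upper h.yg_upper hxT hyT
  rw [← abs_neg, show -(α * D + β * B) = s * (xg * y - yg * x) by rw [hx, hy, h.D_eq, h.B_eq]; ring]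
  linarith

/-- Points outside the plane spanned by `F` and `G`. -/
lemma abs_alpha_le (h : Frame N xe xf xg ye yf yg p q r A B D s)
    (hx : x = α * xe + β * xf + γ * xg) (hy : y = α * ye + β * yf + γ * yg)
    (hxT : |x| ≤ T) (hyT : |y| ≤ T) (hT : 1024 * T ≤ N ^ 16) :
    |α| ≤ |α * p - β * q + γ * r| * B + 1 / 2 := by
  have kF := h.abs_area_F hx hy hxT hyT
  have kG := h.abs_area_G hx hy hxT hyT
  have hpos := h.pos
  have hT0 : 0 ≤ T := (abs_nonneg x).trans hxT
  have e : α = (α * p - β * q + γ * r) * B + (q * (α * D + β * B) + r * (α * A - γ * B)) := by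
    linear_combination (-α) * h.det_eq
  have b1 : |q * (α * D + β * B)| ≤ 12 / 1024 := by
    rw [abs_mul, abs_of_nonneg h.q_nonneg]
    have t1 := mul_le_mul_of_nonneg_left kG h.q_nonneg
    have t2 := mul_le_mul_of_nonneg_left hT (mul_nonneg h.q_nonneg (pow_nonneg hpos.le 10))
    linarith [h.q_upper]
  have b2 : |r * (α * A - γ * B)| ≤ 6 / 1024 := by
    rw [abs_mul, abs_of_nonneg h.r_nonneg]
    have t1 := mul_le_mul_of_nonneg_left kF h.r_nonneg
    have t2 := mul_le_mul_of_nonneg_left hT (mul_nonneg h.r_nonneg (pow_nonneg hpos.le 14))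
    have t3 : r * N ^ 30 ≤ r * N ^ 48 := mul_le_mul_of_nonneg_left
      (pow_le_pow_right₀ (by linarith [h.hN]) (by norm_num)) h.r_nonneg
    linarith [h.r_upper]
  calc |α| = |(α * p - β * q + γ * r) * B + (q * (α * D + β * B) + r * (α * A - γ * B))| := by
        rw [← e]
    _ ≤ |α * p - β * q + γ * r| * B + (|q * (α * D + β * B)| + |r * (α * A - γ * B)|) := by
        refine (abs_add_le _ _).trans (add_le_add ?_ (abs_add_le _ _))
        rw [abs_mul, abs_of_pos h.B_pos]
    _ ≤ |α * p - β * q + γ * r| * B + 1 / 2 := by linarith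

/-- Points outside the plane spanned by `E` and `F`. -/
lemma abs_gamma_le (h : Frame N xe xf xg ye yf yg p q r A B D s)
    (hx : x = α * xe + β * xf + γ * xg) (hy : y = α * ye + β * yf + γ * yg)
    (hxT : |x| ≤ T) (hyT : |y| ≤ T) (hT : 1024 * T ≤ N ^ 10) :
    |γ| ≤ |α * p - β * q + γ * r| * A + 1 / 2 := by
  have kE := h.abs_area_E hx hy hxT hyT
  have kF := h.abs_area_F hx hy hxT hyT
  have hpos := h.pos
  have hT0 : 0 ≤ T := (abs_nonneg x).trans hxT
  have e : γ = (α * p - β * q + γ * r) * A + (q * (β * A + γ * D) + -(p * (α * A - γ * B))) := by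
    linear_combination (-γ) * h.det_eq
  have b1 : |q * (β * A + γ * D)| ≤ 12 / 1024 := by
    rw [abs_mul, abs_of_nonneg h.q_nonneg]
    have t1 := mul_le_mul_of_nonneg_left kE h.q_nonneg
    have t2 := mul_le_mul_of_nonneg_left hT (mul_nonneg h.q_nonneg (pow_nonneg hpos.le 5))
    have t3 : q * N ^ 15 ≤ q * N ^ 26 := mul_le_mul_of_nonneg_left
      (pow_le_pow_right₀ (by linarith [h.hN]) (by norm_num)) h.q_nonneg
    linarith [h.q_upper]
  have b2 : |-(p * (α * A - γ * B))| ≤ 6 / 1024 := by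
    rw [abs_neg, abs_mul, abs_of_nonneg h.p_nonneg]
    have t1 := mul_le_mul_of_nonneg_left kF h.p_nonneg
    have t2 := mul_le_mul_of_nonneg_left hT (mul_nonneg h.p_nonneg (pow_nonneg hpos.le 14))
    linarith [h.p_upper]
  calc |γ| = |(α * p - β * q + γ * r) * A + (q * (β * A + γ * D) + -(p * (α * A - γ * B)))| := by
        rw [← e]
    _ ≤ |α * p - β * q + γ * r| * A + (|q * (β * A + γ * D)| + |-(p * (α * A - γ * B))|) := by
        refine (abs_add_le _ _).trans (add_le_add ?_ (abs_add_le _ _))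
        rw [abs_mul, abs_of_pos h.A_pos]
    _ ≤ |α * p - β * q + γ * r| * A + 1 / 2 := by linarith

lemma form_ne_zero (h : Frame N xe xf xg ye yf yg p q r A B D s) {α β γ : ℤ}
    (hx : x = α * xe + β * xf + γ * xg) (hy : y = α * ye + β * yf + γ * yg)
    (hxT : |x| ≤ T) (hyT : |y| ≤ T) (hT : 1024 * T ≤ N ^ 10)
    (h0 : α * p - β * q + γ * r = 0) : α = 0 ∧ β = 0 ∧ γ = 0 := by
  have hT' : 1024 * T ≤ N ^ 16 :=
    hT.trans (pow_le_pow_right₀ (by linarith [h.hN]) (by norm_num))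
  have hα : α = 0 := by
    have := h.abs_alpha_le hx hy hxT hyT hT'
    rw [h0, abs_zero, zero_mul] at this
    by_contra hne
    have : (1 : ℝ) ≤ |(α : ℝ)| := by exact_mod_cast Int.one_le_abs hne
    linarith
  have hγ : γ = 0 := by
    have := h.abs_gamma_le hx hy hxT hyT hT
    rw [h0, abs_zero, zero_mul] at this
    by_contra hne
    have : (1 : ℝ) ≤ |(γ : ℝ)| := by exact_mod_cast Int.one_le_abs hne
    linarith
  refine ⟨hα, ?_, hγ⟩
  subst hα hγ
  have hq : q ≠ 0 := by
    rintro rfl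
    linarith [h.q_lower]
  have : (β : ℝ) * q = 0 := by push_cast at h0; linarith
  exact_mod_cast (mul_eq_zero.1 this).resolve_right hq

/-- The lower bounds for the form at points `(-x, y, _)` with `x ≤ 0 ≤ y`. -/
lemma form_lower_bound (h : Frame N xe xf xg ye yf yg p q r A B D s) {α β γ : ℤ}
    (hx : x = α * xe + β * xf + γ * xg) (hy : y = α * ye + β * yf + γ * yg)
    (hxT : |x| ≤ T) (hyT : |y| ≤ T) (hx0 : x ≤ 0) (hy0 : 0 ≤ y) (hxy : x ≠ 0 ∨ y ≠ 0)
    (hT₁ : N ^ 8 ≤ 1024 * T) (hT₂ : 1024 * T ≤ N ^ 16) :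
    ∃ k m : ℕ, 10 * m ≤ 19 * k ∧ N ^ k ≤ 1024 * T ∧
      1 ≤ 200 * (|α * p - β * q + γ * r| * N ^ m) := by
  have hN := h.hN
  have hpos := h.pos
  obtain ⟨xe0, ye0⟩ := h.E_pos
  obtain ⟨xf0, yf0⟩ := h.F_pos
  obtain ⟨xg0, yg0⟩ := h.G_pos
  have one_le {n : ℤ} (hn : n ≠ 0) : (1 : ℝ) ≤ |(n : ℝ)| := by exact_mod_cast Int.one_le_abs hn
  by_cases hα : α = 0
  · subst hα
    simp only [Int.cast_zero, zero_mul, zero_add] at hx hy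
    have hβ : β ≠ 0 := by
      rintro rfl
      simp only [Int.cast_zero, zero_mul, zero_add] at hx hy
      simp [hx, hy, eq_zero_of_sector xg0 yg0 (hx ▸ hx0) (hy ▸ hy0)] at hxy
    have hγ : γ ≠ 0 := by
      rintro rfl
      simp only [Int.cast_zero, zero_mul, add_zero] at hx hy
      exact hβ (by exact_mod_cast eq_zero_of_sector xf0 yf0 (hx ▸ hx0) (hy ▸ hy0))
    obtain ⟨hneg, -⟩ := le_mul_of_sector xf0 yf0 h.xf_upper h.yf_upper (pow_pos hpos 10)
      h.xg_lower h.yg_lower (α := β) (β := γ) (by exact_mod_cast hγ) (hx ▸ hx0) (hy ▸ hy0)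
    refine ⟨14, 26, by norm_num, ?_, ?_⟩
    · have kG := h.abs_area_G (α := 0) (β := β) (γ := γ) (by linarith) (by linarith) hxT hyT
      rw [zero_mul, zero_add, abs_mul, abs_of_pos h.B_pos] at kG
      have k1 := mul_le_mul (one_le hβ) h.B_lower (by positivity) (abs_nonneg _)
      have k2 : N ^ 10 * N ^ 14 ≤ N ^ 10 * (6 * T) := by linarith
      have k3 := le_of_mul_le_mul_left k2 (by positivity)
      have : 0 < T := by nlinarith [pow_pos hpos 14]
      linarith
    · have e : |((0 : ℤ) : ℝ) * p - β * q + γ * r| = |(β : ℝ)| * q + |(γ : ℝ)| * r := by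
        rw [← abs_mul_sub_mul hneg h.q_nonneg h.r_nonneg, ← abs_neg]
        push_cast
        congr 1
        ring
      rw [e]
      have k1 : q ≤ |(β : ℝ)| * q + |(γ : ℝ)| * r := by
        nlinarith [mul_le_mul_of_nonneg_right (one_le hβ) h.q_nonneg,
          mul_nonneg (abs_nonneg (γ : ℝ)) h.r_nonneg]
      have k2 := mul_le_mul_of_nonneg_right k1 (pow_pos hpos 26).le
      linarith [h.q_lower, mul_nonneg h.q_nonneg (pow_pos hpos 26).le]
  by_cases hγ : γ = 0
  · subst hγ
    simp only [Int.cast_zero, zero_mul, add_zero] at hx hy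
    have hβ : β ≠ 0 := by
      rintro rfl
      simp only [Int.cast_zero, zero_mul, add_zero] at hx hy
      exact hα (by exact_mod_cast eq_zero_of_sector xe0 ye0 (hx ▸ hx0) (hy ▸ hy0))
    obtain ⟨hneg, hle⟩ := le_mul_of_sector xe0 ye0 h.xe_upper h.ye_upper (pow_pos hpos 14)
      h.xf_lower h.yf_lower (α := α) (β := β) (by exact_mod_cast hβ) (hx ▸ hx0) (hy ▸ hy0)
    refine ⟨8, 15, by norm_num, hT₁, ?_⟩
    have e : |(α : ℝ) * p - β * q + (0 : ℤ) * r| = |(α : ℝ)| * p + |(β : ℝ)| * q := by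
      rw [← abs_mul_sub_mul hneg h.p_nonneg h.q_nonneg]
      push_cast
      congr 1
      ring
    rw [e]
    have k1 := mul_le_mul_of_nonneg_right (one_le hβ) (pow_pos hpos 14).le
    have k2 : N ^ 5 * N ^ 9 ≤ N ^ 5 * (3 * |(α : ℝ)|) := by linarith
    have k3 := le_of_mul_le_mul_left k2 (by positivity)
    have k4 := mul_le_mul_of_nonneg_right k3 (mul_nonneg h.p_nonneg (pow_pos hpos 15).le)
    have k5 : 0 ≤ |(β : ℝ)| * q * N ^ 15 :=
      mul_nonneg (mul_nonneg (abs_nonneg _) h.q_nonneg) (pow_pos hpos 15).le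
    have k6 : 0 ≤ |(α : ℝ)| * p * N ^ 15 :=
      mul_nonneg (mul_nonneg (abs_nonneg _) h.p_nonneg) (pow_pos hpos 15).le
    linarith [h.p_lower]
  have kα := h.abs_alpha_le hx hy hxT hyT hT₂
  have kB := mul_le_mul_of_nonneg_left h.B_upper
    (abs_nonneg ((α : ℝ) * p - β * q + γ * r))
  rcases le_total (N ^ 13) T with hT | hT
  · refine ⟨13, 24, by norm_num, by linarith [pow_pos hpos 13], ?_⟩
    linarith [one_le hα]
  rcases le_total (N ^ 10) (1024 * T) with hT' | hT'
  · refine ⟨10, 19, by norm_num, hT', ?_⟩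
    suffices hα' : N ^ 5 ≤ 3 * |(α : ℝ)| by
      have h1 := one_le hα
      have h2 : N ^ 5 ≤ N ^ 5 * (108 * (|(α : ℝ) * p - β * q + γ * r| * N ^ 19)) := by linarith
      have h3 := le_of_mul_le_mul_left ((mul_one _).trans_le h2) (pow_pos hpos 5)
      have h4 := mul_nonneg (abs_nonneg ((α : ℝ) * p - β * q + γ * r)) (pow_pos hpos 19).le
      linarith
    by_contra! hlt
    have hβ : β = 0 := by
      by_contra hβ
      have kG := h.abs_area_G hx hy hxT hyT
      have k1 : |(β : ℝ)| * B ≤ |(α : ℝ)| * D + 6 * N ^ 10 * T := by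
        have := abs_sub (α * D + β * B : ℝ) (α * D)
        rw [add_sub_cancel_left, abs_mul, abs_of_pos h.B_pos, abs_mul (α : ℝ),
          abs_of_pos h.D_pos] at this
        linarith
      have k2 := mul_le_mul (one_le hβ) h.B_lower (by positivity) (abs_nonneg _)
      have k3 := mul_le_mul hlt.le h.D_upper h.D_pos.le (by positivity)
      have k4 := mul_le_mul_of_nonneg_left hT (show 0 ≤ 6 * N ^ 10 by positivity)
      have k5 : N ^ 20 ≤ N ^ 23 := pow_le_pow_right₀ (by linarith) (by norm_num)
      have k6 := mul_le_mul_of_nonneg_right hN (pow_pos hpos 23).le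
      have k7 := pow_pos hpos 23
      linarith
    subst hβ
    simp only [Int.cast_zero, zero_mul, add_zero] at hx hy
    obtain ⟨-, hle⟩ := le_mul_of_sector xe0 ye0 h.xe_upper h.ye_upper (pow_pos hpos 10)
      h.xg_lower h.yg_lower (α := α) (β := γ) (by exact_mod_cast hγ) (hx ▸ hx0) (hy ▸ hy0)
    have k1 := mul_le_mul_of_nonneg_right (one_le hγ) (pow_pos hpos 10).le
    have k2 : N ^ 5 * N ^ 5 ≤ N ^ 5 * (3 * |(α : ℝ)|) := by linarith
    linarith [le_of_mul_le_mul_left k2 (pow_pos hpos 5)]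
  · refine ⟨8, 13, by norm_num, hT₁, ?_⟩
    have kγ := h.abs_gamma_le hx hy hxT hyT hT'
    have kA := mul_le_mul_of_nonneg_left h.A_upper
      (abs_nonneg ((α : ℝ) * p - β * q + γ * r))
    linarith [one_le hγ]

end Frame

/-- Parameters for which the linear form takes values of prescribed signs on all vectors of three
ladders. -/
lemma exists_forall_sign {xe xf ye yf ze zf : ℕ → ℝ} (hx : IsLadder xe xf) (hy : IsLadder ye yf)
    (hz : IsLadder ze zf) (hB : ∀ i, 0 < (-1) ^ i * (xf i * ye (i + 1) - xe (i + 1) * yf i))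
    (hdet : ∀ i, ze i * ((-1) ^ i * (xf i * ye (i + 1) - xe (i + 1) * yf i))
      - zf i * ((-1) ^ i * (xe i * ye (i + 1) - xe (i + 1) * ye i))
      + ze (i + 1) * ((-1) ^ i * (xe i * yf i - xf i * ye i)) = 1)
    (hbdd : ∃ R, ∀ θ₁ θ₂ : ℝ, 0 ≤ ze 0 - θ₁ * xe 0 + θ₂ * ye 0 → zf 0 - θ₁ * xf 0 + θ₂ * yf 0 ≤ 0 →
      0 ≤ ze 1 - θ₁ * xe 1 + θ₂ * ye 1 → |θ₁| ≤ R ∧ |θ₂| ≤ R) :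
    ∃ θ₁ θ₂ : ℝ, ∀ i, 0 ≤ ze i - θ₁ * xe i + θ₂ * ye i ∧ zf i - θ₁ * xf i + θ₂ * yf i ≤ 0 := by
  let C : ℕ → Set (ℝ × ℝ) := fun i => {θ | 0 ≤ ze i - θ.1 * xe i + θ.2 * ye i} ∩
    ({θ | zf i - θ.1 * xf i + θ.2 * yf i ≤ 0} ∩
      {θ | 0 ≤ ze (i + 1) - θ.1 * xe (i + 1) + θ.2 * ye (i + 1)})
  have hclosed : ∀ i, IsClosed (C i) := fun i =>
    (isClosed_le (by fun_prop) (by fun_prop)).inter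
      ((isClosed_le (by fun_prop) (by fun_prop)).inter (isClosed_le (by fun_prop) (by fun_prop)))
  have hcompact : IsCompact (C 0) := by
    obtain ⟨R, hR⟩ := hbdd
    refine (isCompact_Icc (a := ((-R, -R) : ℝ × ℝ)) (b := (R, R))).of_isClosed_subset (hclosed 0) ?_
    rintro ⟨θ₁, θ₂⟩ ⟨h1, h2, h3⟩
    obtain ⟨k1, k2⟩ := hR θ₁ θ₂ h1 h2 h3
    exact ⟨⟨(abs_le.1 k1).1, (abs_le.1 k2).1⟩, ⟨(abs_le.1 k1).2, (abs_le.1 k2).2⟩⟩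
  have hanti : ∀ i, C (i + 1) ⊆ C i := by
    rintro i ⟨θ₁, θ₂⟩ ⟨h1, h2, h3⟩
    obtain ⟨k1, k2⟩ := (hx.form hy hz θ₁ θ₂).sign_backward i h1 h2 h3
    exact ⟨k1, k2, h1⟩
  have hne : ∀ i, (C i).Nonempty := by
    intro i
    have hb := hB i
    have hd := hdet i
    set b := xf i * ye (i + 1) - xe (i + 1) * yf i with hbdef
    have hb0 : b ≠ 0 := right_ne_zero_of_mul hb.ne'
    have k2 : zf i - (zf i * ye (i + 1) - ze (i + 1) * yf i) / b * xf i
        + (zf i * xe (i + 1) - ze (i + 1) * xf i) / b * yf i = 0 := by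
      field_simp
      rw [hbdef]; ring
    have k3 : ze (i + 1) - (zf i * ye (i + 1) - ze (i + 1) * yf i) / b * xe (i + 1)
        + (zf i * xe (i + 1) - ze (i + 1) * xf i) / b * ye (i + 1) = 0 := by
      field_simp
      rw [hbdef]; ring
    refine ⟨((zf i * ye (i + 1) - ze (i + 1) * yf i) / b,
      (zf i * xe (i + 1) - ze (i + 1) * xf i) / b), ?_, k2.le, k3.ge⟩
    have k1 : (ze i - (zf i * ye (i + 1) - ze (i + 1) * yf i) / b * xe i
        + (zf i * xe (i + 1) - ze (i + 1) * xf i) / b * ye i) * ((-1) ^ i * b) = 1 := by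
      refine Eq.trans ?_ hd
      field_simp
      ring
    exact nonneg_of_mul_nonneg_left (zero_le_one.trans k1.ge) hb
  obtain ⟨⟨θ₁, θ₂⟩, hθ⟩ := IsCompact.nonempty_iInter_of_sequence_nonempty_isCompact_isClosed
    C hanti hne hcompact hclosed
  rw [Set.mem_iInter] at hθ
  exact ⟨θ₁, θ₂, fun i => ⟨(hθ i).1, (hθ i).2.1⟩⟩

lemma exists_frames : ∃ θ₁ θ₂ : ℝ, ∀ i, ∃ xe xf xg ye yf yg p q r A B D s : ℝ,
    Frame (scale ℝ i) xe xf xg ye yf yg p q r A B D s ∧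
    ∀ x y z : ℤ, ∃ α β γ : ℤ, (x : ℝ) = α * xe + β * xf + γ * xg ∧
      (y : ℝ) = α * ye + β * yf + γ * yg ∧ z - θ₁ * x + θ₂ * y = α * p - β * q + γ * r := by
  obtain ⟨xe, xf, hx, xe0, xf0, xe1⟩ := exists_isLadder (2 ^ 50 + 1) (2 ^ 140 + 2 ^ 90 + 1) (2 ^ 100)
  obtain ⟨ye, yf, hy, ye0, yf0, ye1⟩ := exists_isLadder (2 ^ 50) (2 ^ 140 + 1) (2 ^ 101)
  obtain ⟨ze, zf, hz, ze0, zf0, ze1⟩ := exists_isLadder 0 0 1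
  have s0 := scale_zero ℝ
  have s1 : scale ℝ 1 = 2 ^ 20 := by rw [scale_succ, s0]; norm_num
  have xl := hx.cast.lower (by simp only [xe0, s0]; norm_num) (by simp only [xf0, s0]; norm_num)
    (by simp only [xe1, s1]; norm_num)
  have yl := hy.cast.lower (by simp only [ye0, s0]; norm_num) (by simp only [yf0, s0]; norm_num)
    (by simp only [ye1, s1]; norm_num)
  have xu := hx.cast.upper (by simp only [xe0, s0]; norm_num) (by simp only [xf0, s0]; norm_num)
    (by simp only [xe1, s1]; norm_num)
  have yu := hy.cast.upper (by simp only [ye0, s0]; norm_num) (by simp only [yf0, s0]; norm_num)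
    (by simp only [ye1, s1]; norm_num)
  have e_le {e : ℕ → ℤ} {i : ℕ}
      (h : scale ℝ i * e i ≤ (3 * scale ℝ i - 1) * scale ℝ i ^ 5) :
      (e i : ℝ) ≤ 3 * scale ℝ i ^ 5 := by
    have hN := scale_ge i
    have : 0 ≤ scale ℝ i ^ 5 := by positivity
    exact le_of_mul_le_mul_left (show scale ℝ i * e i ≤ _ by linarith) (by linarith)
  have f_le {e : ℕ → ℤ} {i : ℕ}
      (h : 2 * scale ℝ i * e i ≤ (6 * scale ℝ i - 1) * scale ℝ i ^ 14) :
      (e i : ℝ) ≤ 3 * scale ℝ i ^ 14 := by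
    have hN := scale_ge i
    have : 0 ≤ scale ℝ i ^ 14 := by positivity
    exact le_of_mul_le_mul_left (show (2 * scale ℝ i) * e i ≤ _ by linarith) (by linarith)
  have g_ge {e : ℕ → ℤ} {i : ℕ} (h : scale ℝ (i + 1) ^ 5 ≤ e (i + 1)) :
      scale ℝ i ^ 10 ≤ e (i + 1) := by
    rw [scale_succ] at h
    linarith
  have g_le {e : ℕ → ℤ} {i : ℕ} (h : scale ℝ (i + 1) * e (i + 1) ≤
      (3 * scale ℝ (i + 1) - 1) * scale ℝ (i + 1) ^ 5) :
      (e (i + 1) : ℝ) ≤ 3 * scale ℝ i ^ 10 := by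
    have := e_le h
    rw [scale_succ] at this
    linarith
  have area := area_bounds hx.cast hy.cast (by simp only [xe0, yf0, xf0, ye0]; norm_num)
    (by simp only [ye1, yf0, xf0, xe1, s0]; norm_num)
    (by simp only [ye1, ye0, xe0, xe1]; norm_num)
  have A_le (i : ℕ) : (-1) ^ i * ((xe i : ℝ) * yf i - xf i * ye i) ≤ 20 * scale ℝ i ^ 13 := by
    cases i with
    | zero => simp only [xe0, yf0, xf0, ye0, s0]; norm_num
    | succ i =>
      have hN := scale_ge i
      have bound {u₁ u₂ M : ℝ} (h₁ : 0 ≤ u₁) (h₂ : 0 ≤ u₂) (hM₁ : u₁ ≤ M) (hM₂ : u₂ ≤ M) :=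
        le_of_abs_le (abs_area_le (s := -(-1) ^ i) (by simp)
          ((pow_nonneg (by linarith) 10).trans (g_ge (xl i).2.2))
          ((pow_nonneg (by linarith) 10).trans (g_ge (yl i).2.2))
          (g_le (xu i).2.2) (g_le (yu i).2.2)
          (x := u₁) (y := u₂) (T := M) (by rwa [abs_of_nonneg h₁]) (by rwa [abs_of_nonneg h₂]))
      have D_le := bound ((pow_nonneg (by linarith) 5).trans (xl i).1)
        ((pow_nonneg (by linarith) 5).trans (yl i).1) (e_le (xu i).1) (e_le (yu i).1)
      have B_le := bound ((pow_nonneg (by linarith) 14).trans (xl i).2.1)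
        ((pow_nonneg (by linarith) 14).trans (yl i).2.1) (f_le (xu i).2.1) (f_le (yu i).2.1)
      rw [(area_recursion hx.cast hy.cast i).1, scale_succ, pow_succ (-1 : ℝ)]
      set N := scale ℝ i
      have h1 := mul_le_mul_of_nonneg_left B_le (sq_nonneg N)
      have h2 : N ^ 15 * 1024 ≤ N ^ 15 * N ^ 11 := by
        have : (1024 : ℝ) ≤ N ^ 11 := le_trans (by norm_num) (pow_le_pow_left₀ (by norm_num) hN 11)
        gcongr
      have h3 : 0 ≤ N ^ 15 := by positivity
      linear_combination D_le + h1 + 2 * h2 + 2030 * h3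
  have det := det_eq hx.cast hy.cast hz.cast
  simp only [xe0, xf0, xe1, ye0, yf0, ye1, ze0, zf0, ze1] at det
  norm_num at det
  obtain ⟨θ₁, θ₂, hθ⟩ := exists_forall_sign hx.cast hy.cast hz.cast
    (fun i => (pow_pos (by linarith [scale_ge i]) 24).trans_le (area i).2.1) det
    ⟨2 ^ 200, fun θ₁ θ₂ h1 h2 h3 => by
      simp only [xe0, xf0, xe1, ye0, yf0, ye1, ze0, zf0, ze1] at h1 h2 h3
      norm_num at h1 h2 h3
      constructor <;> rw [abs_le] <;> constructor <;> linarith⟩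
  have form := hx.cast.form hy.cast hz.cast θ₁ θ₂
  refine ⟨θ₁, θ₂, fun i => ⟨xe i, xf i, xe (i + 1), ye i, yf i, ye (i + 1),
    ze i - θ₁ * xe i + θ₂ * ye i, -(zf i - θ₁ * xf i + θ₂ * yf i),
    ze (i + 1) - θ₁ * xe (i + 1) + θ₂ * ye (i + 1),
    _, _, _, (-1) ^ i, ⟨scale_ge i, (xl i).1, e_le (xu i).1, (yl i).1, e_le (yu i).1,
      (xl i).2.1, f_le (xu i).2.1, (yl i).2.1, f_le (yu i).2.1,
      g_ge (xl i).2.2, g_le (xu i).2.2, g_ge (yl i).2.2, g_le (yu i).2.2,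
      by simp, rfl, rfl, rfl, (area i).1, A_le i, (area i).2.1, (area i).2.2,
      (hθ i).1, neg_nonneg.2 (hθ i).2, (hθ (i + 1)).1,
      (form.ratio_bounds i (hθ (i + 1)).1 (hθ (i + 1)).2 (hθ (i + 2)).1).1,
      (form.ratio_bounds i (hθ (i + 1)).1 (hθ (i + 1)).2 (hθ (i + 2)).1).2.1,
      (form.ratio_bounds i (hθ (i + 1)).1 (hθ (i + 1)).2 (hθ (i + 2)).1).2.2,
      ?_⟩, fun x y z => ?_⟩⟩
  · linear_combination det i
  · obtain ⟨α, β, γ, h1, h2, h3⟩ := exists_coeffs hx hy hz (x := x) (y := y) (z := z)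
      ⟨(x - z * 2 ^ 100) * (2 ^ 140 + 1) - (y - z * 2 ^ 101) * (2 ^ 140 + 2 ^ 90 + 1),
        (2 ^ 50 + 1) * (y - z * 2 ^ 101) - 2 ^ 50 * (x - z * 2 ^ 100), z, by
        simp only [xe0, xf0, xe1, ye0, yf0, ye1, ze0, zf0, ze1]
        refine ⟨by ring, by ring, by ring⟩⟩ i
    have k1 : (x : ℝ) = α * xe i + β * xf i + γ * xe (i + 1) := by exact_mod_cast h1
    have k2 : (y : ℝ) = α * ye i + β * yf i + γ * ye (i + 1) := by exact_mod_cast h2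
    have k3 : (z : ℝ) = α * ze i + β * zf i + γ * ze (i + 1) := by exact_mod_cast h3
    exact ⟨α, β, γ, k1, k2, by linear_combination k3 - θ₁ * k1 + θ₂ * k2⟩

lemma pow_le_mul_rpow {N T σ : ℝ} {k m : ℕ} (hN : 1 ≤ N) (hT : 1 ≤ T) (hσ : 19 / 10 ≤ σ)
    (hkm : 10 * m ≤ 19 * k) (h : N ^ k ≤ 1024 * T) : N ^ m ≤ 2 ^ 19 * T ^ σ := by
  have hkm' : (m : ℝ) ≤ k * (19 / 10) := by
    have : (10 * m : ℝ) ≤ 19 * k := by exact_mod_cast hkm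
    linarith
  calc N ^ m = N ^ (m : ℝ) := (Real.rpow_natCast N m).symm
    _ ≤ N ^ ((k : ℝ) * (19 / 10)) := Real.rpow_le_rpow_of_exponent_le hN hkm'
    _ = (N ^ k) ^ (19 / 10 : ℝ) := by rw [Real.rpow_mul (by linarith), Real.rpow_natCast]
    _ ≤ (1024 * T) ^ (19 / 10 : ℝ) := Real.rpow_le_rpow (by positivity) h (by norm_num)
    _ = 2 ^ 19 * T ^ (19 / 10 : ℝ) := by
      rw [Real.mul_rpow (by norm_num) (by linarith),
        show (1024 : ℝ) = 2 ^ (10 : ℝ) by norm_num, ← Real.rpow_mul (by norm_num)]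
      norm_num
    _ ≤ 2 ^ 19 * T ^ σ := by gcongr

lemma le_of_isGreatest_root {σ : ℝ}
    (hσmax : ∀ x : ℝ, x ^ 4 - 2 * x ^ 2 - 4 * x + 1 = 0 → x ≤ σ) : 19 / 10 ≤ σ := by
  obtain ⟨x, hx, h⟩ := intermediate_value_Icc (a := (19 / 10 : ℝ)) (b := 2) (by norm_num)
    (f := fun x => x ^ 4 - 2 * x ^ 2 - 4 * x + 1) (by fun_prop)
    (show (0 : ℝ) ∈ Set.Icc _ _ by constructor <;> norm_num)
  exact hx.1.trans (hσmax x h)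

lemma exists_scale_pow_eight {T : ℝ} (hT : 2 ^ 200 ≤ T) :
    ∃ i, scale ℝ i ^ 8 ≤ 1024 * T ∧ 1024 * T ≤ scale ℝ i ^ 16 := by
  have hex : ∃ i, 1024 * T < scale ℝ i ^ 8 := by
    obtain ⟨i, hi⟩ := exists_lt_scale (1024 * T)
    exact ⟨i, hi.trans_le (le_self_pow₀ (by linarith [scale_ge i]) (by norm_num))⟩
  classical
  obtain ⟨j, hj⟩ : ∃ j, Nat.find hex = j + 1 := by
    refine Nat.exists_eq_succ_of_ne_zero fun h0 => ?_
    have := Nat.find_spec hex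
    rw [h0, scale_zero] at this
    norm_num at this hT
    linarith
  refine ⟨j, not_lt.1 (Nat.find_min hex (by omega)), ?_⟩
  have := Nat.find_spec hex
  rw [hj, scale_succ, ← pow_mul] at this
  exact this.le

/-- Moshchevitin's counterexample to W.M. Schmidt's conjecture. -/
theorem stmt16 (σ : ℝ) (hσ : σ ^ 4 - 2 * σ ^ 2 - 4 * σ + 1 = 0)
    (hσmax : ∀ x : ℝ, x ^ 4 - 2 * x ^ 2 - 4 * x + 1 = 0 → x ≤ σ) :
    ∃ θ₁ θ₂ : ℝ,
      (∀ a b c : ℤ, (a : ℝ) * θ₁ + (b : ℝ) * θ₂ + (c : ℝ) = 0 →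
        a = 0 ∧ b = 0 ∧ c = 0) ∧
      ∀ x₁ x₂ : ℤ, 0 ≤ x₁ → 0 ≤ x₂ → 2 ^ 200 ≤ max x₁ x₂ →
        1 / (2 ^ 300 * ((max x₁ x₂ : ℤ) : ℝ) ^ σ) ≤ nint (θ₁ * x₁ + θ₂ * x₂) := by
  obtain ⟨θ₁, θ₂, H⟩ := exists_frames
  refine ⟨θ₁, θ₂, fun a b c h0 => ?_, fun x₁ x₂ hx₁ hx₂ hmax => ?_⟩
  · obtain ⟨i, hi⟩ := exists_lt_scale (1024 * max |(a : ℝ)| |(b : ℝ)|)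
    obtain ⟨xe, xf, xg, ye, yf, yg, p, q, r, A, B, D, s, hF, hspan⟩ := H i
    obtain ⟨α, β, γ, hx, hy, hz⟩ := hspan (-a) b c
    obtain ⟨rfl, rfl, rfl⟩ := hF.form_ne_zero hx hy
      (by push_cast; rw [abs_neg]; exact le_max_left _ _) (le_max_right _ _)
      (hi.le.trans (le_self_pow₀ (by linarith [hF.hN]) (by norm_num)))
      (by rw [← hz]; push_cast; linarith)
    simp only [Int.cast_zero, zero_mul, add_zero, Int.cast_eq_zero, neg_eq_zero] at hx hy
    subst hx hy
    simpa using h0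
  · have hT : (2 : ℝ) ^ 200 ≤ ((max x₁ x₂ : ℤ) : ℝ) := by exact_mod_cast hmax
    have hT₁ : (x₁ : ℝ) ≤ ((max x₁ x₂ : ℤ) : ℝ) := by exact_mod_cast le_max_left _ _
    have hT₂ : (x₂ : ℝ) ≤ ((max x₁ x₂ : ℤ) : ℝ) := by exact_mod_cast le_max_right _ _
    have hx₁' : (0 : ℝ) ≤ x₁ := by exact_mod_cast hx₁
    have hx₂' : (0 : ℝ) ≤ x₂ := by exact_mod_cast hx₂
    have hne : x₁ ≠ 0 ∨ x₂ ≠ 0 := by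
      by_contra! h
      rw [h.1, h.2] at hmax
      norm_num at hmax
    set T : ℝ := ((max x₁ x₂ : ℤ) : ℝ)
    have hT1 : 1 ≤ T := le_trans (by norm_num) hT
    obtain ⟨i, hi₁, hi₂⟩ := exists_scale_pow_eight hT
    obtain ⟨xe, xf, xg, ye, yf, yg, p, q, r, A, B, D, s, hF, hspan⟩ := H i
    obtain ⟨α, β, γ, hx, hy, hz⟩ := hspan (-x₁) x₂ (-round (θ₁ * x₁ + θ₂ * x₂))
    obtain ⟨k, m, hkm, hk, hm⟩ := hF.form_lower_bound hx hy
      (by push_cast; rwa [abs_neg, abs_of_nonneg hx₁']) (by rwa [abs_of_nonneg hx₂'])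
      (by push_cast; linarith) hx₂' (by simpa using hne) hi₁ hi₂
    rw [show nint (θ₁ * x₁ + θ₂ * x₂) = |α * p - β * q + γ * r| by
      rw [← hz, nint]; push_cast; congr 1; ring]
    set L := |α * p - β * q + γ * r|
    have hL : 0 ≤ L := abs_nonneg _
    have hTσ : 0 < T ^ σ := Real.rpow_pos_of_pos (by linarith) σ
    rw [div_le_iff₀ (by positivity)]
    have h1 := mul_le_mul_of_nonneg_left
      (pow_le_mul_rpow (by linarith [hF.hN]) hT1 (le_of_isGreatest_root hσmax) hkm hk) hL
    have h300 : (200 * 2 ^ 19 : ℝ) ≤ 2 ^ 300 :=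
      le_trans (b := 2 ^ 30) (by norm_num) (pow_le_pow_right₀ (by norm_num) (by norm_num))
    generalize (2 : ℝ) ^ 300 = M at h300 ⊢
    have h2 := mul_le_mul_of_nonneg_right h300 (mul_nonneg hL hTσ.le)
    linear_combination hm + 200 * h1 + h2
end
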